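/- arXiv:2311.10575 — 11 statements merged into one kernel-verified Lean document; each statement's English description precedes it below -/
import Mathlib

section
/- Let σ > 0 and define J(ξ) = φ(ξ) − φ(σ) − (φ(σ)/σ²)(ξ² − σ²). Then J(ξ) > 0 for every ξ ∈ (0,σ). -/
open Set

/-- The function `φ(ξ) = ξ(√(1+ξ²) − ξ)`. -/
noncomputable def phi (ξ : ℝ) : ℝ := ξ * (Real.sqrt (1 + ξ ^ 2) - ξ)

/-- For `σ > 0`, the function `J(ξ) = φ(ξ) − φ(σ) − (φ(σ)/σ²)(ξ² − σ²)` is positive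
on `(0, σ)`. -/
theorem J_pos (σ : ℝ) (hσ : 0 < σ) :
    ∀ ξ ∈ Set.Ioo (0 : ℝ) σ,
      0 < phi ξ - phi σ - (phi σ / σ ^ 2) * (ξ ^ 2 - σ ^ 2) := by
  rintro ξ ⟨h0, h1⟩
  have key : ξ * Real.sqrt (1 + σ ^ 2) < σ * Real.sqrt (1 + ξ ^ 2) := by
    have ha := Real.sq_sqrt (show (0 : ℝ) ≤ 1 + ξ ^ 2 by positivity)
    have hb := Real.sq_sqrt (show (0 : ℝ) ≤ 1 + σ ^ 2 by positivity)
    refine lt_of_pow_lt_pow_left₀ 2 (by positivity) ?_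
    rw [mul_pow, mul_pow, ha, hb]
    nlinarith
  have e : phi ξ - phi σ - (phi σ / σ ^ 2) * (ξ ^ 2 - σ ^ 2)
      = ξ / σ * (σ * Real.sqrt (1 + ξ ^ 2) - ξ * Real.sqrt (1 + σ ^ 2)) := by
    unfold phi
    generalize Real.sqrt (1 + ξ ^ 2) = a
    generalize Real.sqrt (1 + σ ^ 2) = b
    field_simp
    ring
  rw [e]
  exact mul_pos (div_pos h0 hσ) (sub_pos.mpr key)
end

section
/- Let 0 < σ₁ < σ₂ and define J(ξ) = φ(ξ) − φ(σ₁) − ((φ(σ₂) − φ(σ₁))/(σ₂² − σ₁²))·(ξ² − σ₁²). Then J(ξ) > 0 for every ξ ∈ (σ₁, σ₂). -/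
open Set

theorem phi_aux (a x b A X B : ℝ) (ha : 0 < a) (hax : a < x) (hxb : x < b)
    (hA : 0 ≤ A) (hX : 0 ≤ X) (hB : 0 ≤ B)
    (hA2 : A ^ 2 = a + a ^ 2) (hX2 : X ^ 2 = x + x ^ 2) (hB2 : B ^ 2 = b + b ^ 2) :
    (b - x) * A + (x - a) * B < (b - a) * X := by
  have hb : 0 < b := by linarith
  have hab : 0 < a * b := mul_pos ha hb
  have hAB : A * B < (a + b) / 2 + a * b := by
    apply lt_of_pow_lt_pow_left₀ 2 (by positivity)
    have h1 : (A * B) ^ 2 = (a + a ^ 2) * (b + b ^ 2) := by rw [mul_pow, hA2, hB2]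
    have h2 : 0 < (b - a) ^ 2 := by
      have : 0 < b - a := by linarith
      positivity
    rw [h1]
    nlinarith
  have hpq : 0 < (b - x) * (x - a) := mul_pos (by linarith) (by linarith)
  apply lt_of_pow_lt_pow_left₀ 2 (mul_nonneg (by linarith) hX)
  have h3 := mul_lt_mul_of_pos_left hAB hpq
  have e1 : ((b - x) * A + (x - a) * B) ^ 2
      = (b - x) ^ 2 * (a + a ^ 2) + (x - a) ^ 2 * (b + b ^ 2)
        + 2 * ((b - x) * (x - a) * (A * B)) := by
    rw [← hA2, ← hB2]; ring
  have e2 : ((b - a) * X) ^ 2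
      = (b - x) ^ 2 * (a + a ^ 2) + (x - a) ^ 2 * (b + b ^ 2)
        + 2 * ((b - x) * (x - a) * ((a + b) / 2 + a * b)) := by
    rw [mul_pow, hX2]; ring
  rw [e1, e2]
  linarith

/-- For `0 < σ₁ < σ₂`, the function
`J(ξ) = φ(ξ) − φ(σ₁) − ((φ(σ₂) − φ(σ₁))/(σ₂² − σ₁²))(ξ² − σ₁²)` is positive on `(σ₁, σ₂)`. -/
theorem J_pos_two (σ₁ σ₂ : ℝ) (hσ₁ : 0 < σ₁) (hσ₁₂ : σ₁ < σ₂) :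
    ∀ ξ ∈ Set.Ioo σ₁ σ₂,
      0 < phi ξ - phi σ₁ - ((phi σ₂ - phi σ₁) / (σ₂ ^ 2 - σ₁ ^ 2)) * (ξ ^ 2 - σ₁ ^ 2) := by
  rintro ξ ⟨h1, h2⟩
  have hξ : 0 < ξ := hσ₁.trans h1
  have hσ₂ : 0 < σ₂ := hσ₁.trans hσ₁₂
  have sq (t : ℝ) : (t * Real.sqrt (1 + t ^ 2)) ^ 2 = t ^ 2 + (t ^ 2) ^ 2 := by
    rw [mul_pow, Real.sq_sqrt (by positivity)]; ring
  have key := phi_aux (σ₁ ^ 2) (ξ ^ 2) (σ₂ ^ 2) _ _ _ (by positivity)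
    (by gcongr) (by gcongr) (by positivity) (by positivity) (by positivity)
    (sq σ₁) (sq ξ) (sq σ₂)
  have hd : 0 < σ₂ ^ 2 - σ₁ ^ 2 := by
    have : σ₁ ^ 2 < σ₂ ^ 2 := by gcongr
    linarith
  rw [div_mul_eq_mul_div, sub_pos, div_lt_iff₀ hd]
  unfold phi
  linarith
end

section
/- Let V₀, E₀ ∈ ℝ with k₀ := E₀ + V₀²/2 > 0, let ε ∈ {+1, −1}, and define on (0,∞): θ(ξ) = ε·√(2 k₀ φ(ξ)), V(ξ) = V₀, and P(ξ) = (k₀ − V₀²/2) − k₀ ξ/√(1+ξ²). Then θ is continuously differentiable on (0,∞), the triple (θ, V, P) satisfies the stationary self-similar axisymmetric Euler system on (0,∞), namely (θ²/2 + (1+ξ²)P)' = −ξV², V'·θ = 0 and (θ² − ξ(θ²/2)' + P)' = 0, and moreover θ(ξ) → 0 as ξ → 0⁺ and θ'(ξ) → 0 as ξ → ∞. -/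
open Set Filter

lemma s_facts (x : ℝ) : 0 < Real.sqrt (1 + x ^ 2) ∧ Real.sqrt (1 + x ^ 2) ^ 2 = 1 + x ^ 2 ∧
    x < Real.sqrt (1 + x ^ 2) := by
  refine ⟨Real.sqrt_pos.2 (by positivity), Real.sq_sqrt (by positivity), ?_⟩
  exact Real.lt_sqrt_of_sq_lt (by linarith)

lemma phi_pos {x : ℝ} (hx : 0 < x) : 0 < phi x :=
  mul_pos hx (sub_pos.2 (s_facts x).2.2)

lemma phi_hasDerivAt (x : ℝ) :
    HasDerivAt phi ((Real.sqrt (1 + x ^ 2) - x) ^ 2 / Real.sqrt (1 + x ^ 2)) x := by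
  obtain ⟨h1, h2, h3⟩ := s_facts x
  have hs : HasDerivAt (fun y : ℝ => 1 + y ^ 2) (2 * x) x := by
    simpa using (hasDerivAt_pow 2 x).const_add 1
  have hq := hs.sqrt (by positivity)
  refine HasDerivAt.congr_deriv (f := phi) ((hasDerivAt_id' x).mul (hq.sub (hasDerivAt_id' x))) ?_
  field_simp
  nlinarith

lemma phi_contDiff : ContDiff ℝ 1 phi := by
  unfold phi
  have : ContDiff ℝ 1 (fun x : ℝ => Real.sqrt (1 + x ^ 2)) :=
    ContDiff.sqrt (by fun_prop) (fun x => by positivity)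
  exact contDiff_id.mul (this.sub contDiff_id)

/-- The explicit family `θ = ε √(2k₀φ)`, `V ≡ V₀`, `P = (k₀ − V₀²/2) − k₀ ξ/√(1+ξ²)` with
`k₀ = E₀ + V₀²/2 > 0` is a classical solution of the stationary self-similar axisymmetric
Euler system on `(0,∞)`, with `θ → 0` at `0⁺` and `θ' → 0` at `∞`. -/
theorem euler_explicit_solution (V₀ E₀ : ℝ) (k₀ : ℝ) (hk₀def : k₀ = E₀ + V₀ ^ 2 / 2)
    (hk₀ : 0 < k₀) (ε : ℝ) (hε : ε = 1 ∨ ε = -1) (θ V P : ℝ → ℝ)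
    (hθ : ∀ ξ, θ ξ = ε * Real.sqrt (2 * k₀ * phi ξ))
    (hV : ∀ ξ, V ξ = V₀)
    (hP : ∀ ξ, P ξ = (k₀ - V₀ ^ 2 / 2) - k₀ * ξ / Real.sqrt (1 + ξ ^ 2)) :
    ContDiffOn ℝ 1 θ (Set.Ioi 0) ∧
    (∀ ξ ∈ Set.Ioi (0 : ℝ),
      deriv (fun s => θ s ^ 2 / 2 + (1 + s ^ 2) * P s) ξ = -ξ * V ξ ^ 2) ∧
    (∀ ξ ∈ Set.Ioi (0 : ℝ), deriv V ξ * θ ξ = 0) ∧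
    (∀ ξ ∈ Set.Ioi (0 : ℝ),
      deriv (fun s => θ s ^ 2 - s * deriv (fun t => θ t ^ 2 / 2) s + P s) ξ = 0) ∧
    Tendsto θ (nhdsWithin 0 (Set.Ioi 0)) (nhds 0) ∧
    Tendsto (deriv θ) atTop (nhds 0) := by
  have hθf : θ = fun ξ => ε * Real.sqrt (2 * k₀ * phi ξ) := funext hθ
  have hVf : V = fun _ => V₀ := funext hV
  have hε2 : ε ^ 2 = 1 := by rcases hε with h | h <;> simp [h]
  have hsq : ∀ s : ℝ, 0 < s → θ s ^ 2 = 2 * k₀ * phi s := by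
    intro s hs
    have := phi_pos hs
    rw [hθ, mul_pow, hε2, Real.sq_sqrt (by positivity), one_mul]
  refine ⟨?_, ?_, ?_, ?_, ?_, ?_⟩
  · rw [hθf]
    refine contDiffOn_const.mul (ContDiffOn.sqrt ?_ ?_)
    · exact contDiffOn_const.mul phi_contDiff.contDiffOn
    · intro x hx
      have := phi_pos hx
      positivity
  · intro ξ hξ
    have he : (fun s => θ s ^ 2 / 2 + (1 + s ^ 2) * P s) =ᶠ[nhds ξ]
        fun s => k₀ - V₀ ^ 2 / 2 * (1 + s ^ 2) := by
      filter_upwards [Ioi_mem_nhds hξ] with s hs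
      obtain ⟨h1, h2, h3⟩ := s_facts s
      rw [hsq s hs, hP, phi]
      have : (1 + s ^ 2) * (k₀ * s / Real.sqrt (1 + s ^ 2)) = k₀ * s * Real.sqrt (1 + s ^ 2) := by
        nth_rw 1 [← h2]
        field_simp
      linear_combination -this
    rw [he.deriv_eq, hV]
    have hs : HasDerivAt (fun y : ℝ => 1 + y ^ 2) (2 * ξ) ξ := by
      simpa using (hasDerivAt_pow 2 ξ).const_add 1
    rw [((hs.const_mul (V₀ ^ 2 / 2)).const_sub k₀).deriv]
    ring
  · intro ξ _
    simp [hVf]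
  · intro ξ hξ
    have he : (fun s => θ s ^ 2 - s * deriv (fun t => θ t ^ 2 / 2) s + P s) =ᶠ[nhds ξ]
        fun _ => k₀ - V₀ ^ 2 / 2 := by
      filter_upwards [Ioi_mem_nhds hξ] with s hs
      obtain ⟨h1, h2, h3⟩ := s_facts s
      have hd : (fun t => θ t ^ 2 / 2) =ᶠ[nhds s] fun t => k₀ * phi t := by
        filter_upwards [Ioi_mem_nhds hs] with t ht
        rw [hsq t ht]
        ring
      rw [hd.deriv_eq, ((phi_hasDerivAt s).const_mul k₀).deriv, hsq s hs, hP, phi]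
      generalize Real.sqrt (1 + s ^ 2) = q at *
      field_simp
      have h4 : s ^ 2 = q ^ 2 - 1 := by linarith
      linear_combination (2 * k₀ * s) * h2
    rw [he.deriv_eq]
    simp
  · rw [hθf]
    have hc : Continuous (fun ξ => ε * Real.sqrt (2 * k₀ * phi ξ)) := by
      have := phi_contDiff.continuous
      fun_prop
    have := hc.tendsto 0
    simp only [phi, zero_mul, mul_zero, Real.sqrt_zero] at this
    exact this.mono_left nhdsWithin_le_nhds
  · have hlim : Tendsto (fun x : ℝ => k₀ / Real.sqrt (2 * k₀ / 3) * x⁻¹) atTop (nhds 0) := by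
      simpa using tendsto_inv_atTop_zero.const_mul (k₀ / Real.sqrt (2 * k₀ / 3))
    refine squeeze_zero_norm' ?_ hlim
    filter_upwards [eventually_ge_atTop (1 : ℝ)] with x hx
    have hx0 : 0 < x := by linarith
    have hp := phi_pos hx0
    obtain ⟨h1, h2, h3⟩ := s_facts x
    have hd := ((((phi_hasDerivAt x).const_mul (2 * k₀)).sqrt (by positivity)).const_mul ε).deriv
    rw [hθf, hd]
    have hε1 : |ε| = 1 := by rcases hε with h | h <;> simp [h]
    have hphi : 1 / 3 ≤ phi x := by
      have : Real.sqrt (1 + x ^ 2) ≤ 2 * x := by nlinarith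
      unfold phi
      nlinarith
    have hle : Real.sqrt (2 * k₀ / 3) ≤ Real.sqrt (2 * k₀ * phi x) :=
      Real.sqrt_le_sqrt (by nlinarith)
    have hpos : 0 < Real.sqrt (2 * k₀ / 3) := Real.sqrt_pos.2 (by positivity)
    have hφ' : (Real.sqrt (1 + x ^ 2) - x) ^ 2 / Real.sqrt (1 + x ^ 2) ≤ x⁻¹ := by
      rw [inv_eq_one_div]
      apply div_le_div₀ zero_le_one _ hx0 h3.le
      nlinarith
    have hφ0 : 0 ≤ (Real.sqrt (1 + x ^ 2) - x) ^ 2 / Real.sqrt (1 + x ^ 2) := by positivity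
    generalize (Real.sqrt (1 + x ^ 2) - x) ^ 2 / Real.sqrt (1 + x ^ 2) = d at *
    have hpos' := hpos.trans_le hle
    rw [Real.norm_eq_abs, abs_mul, hε1, one_mul, abs_of_nonneg (by positivity)]
    calc 2 * k₀ * d / (2 * Real.sqrt (2 * k₀ * phi x))
        = k₀ * d / Real.sqrt (2 * k₀ * phi x) := by field_simp
      _ ≤ k₀ * x⁻¹ / Real.sqrt (2 * k₀ / 3) := by gcongr
      _ = _ := by ring
end

section
/- Let ν > 0, V∞ > 0, let Θ : [0,1) → ℝ be continuous, and let V ∈ C²([0,1)) satisfy ν V''(x) = Θ(x) V'(x) on (0,1), with V(0) = 0 and V(x) → V∞ as x → 1⁻. Then V is strictly increasing on [0,1) and 0 < V(x) < V∞ for every x ∈ (0,1). -/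
open Set Filter

/-- If `ν > 0`, `V∞ > 0`, `Θ` is continuous on `[0,1)` and `V ∈ C²([0,1))` satisfies
`ν V'' = Θ V'` on `(0,1)` with `V(0) = 0` and `V(x) → V∞` as `x → 1⁻`, then `V` is strictly
increasing on `[0,1)` and `0 < V(x) < V∞` on `(0,1)`. -/
theorem swirl_strictMono (ν Vinf : ℝ) (hν : 0 < ν) (hVinf : 0 < Vinf)
    (Θ V : ℝ → ℝ)
    (hΘ : ContinuousOn Θ (Set.Ico 0 1))
    (hV : ContDiffOn ℝ 2 V (Set.Ico 0 1))
    (hODE : ∀ x ∈ Set.Ioo (0 : ℝ) 1, ν * deriv (deriv V) x = Θ x * deriv V x)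
    (hV0 : V 0 = 0)
    (hV1 : Tendsto V (nhdsWithin 1 (Set.Iio 1)) (nhds Vinf)) :
    StrictMonoOn V (Set.Ico 0 1) ∧ ∀ x ∈ Set.Ioo (0 : ℝ) 1, 0 < V x ∧ V x < Vinf := by
  have hnhds : ∀ x ∈ Ioo (0 : ℝ) 1, Ico (0 : ℝ) 1 ∈ nhds x := fun x hx => Ico_mem_nhds hx.1 hx.2
  have hsub : Ioo (0 : ℝ) 1 ⊆ Ico 0 1 := Ioo_subset_Ico_self
  have hcont : ContinuousOn V (Ico 0 1) := hV.continuousOn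
  have hW : ∀ x ∈ Ioo (0 : ℝ) 1, HasDerivAt (deriv V) (Θ x / ν * deriv V x) x := by
    intro x hx
    have h1 : ContDiffOn ℝ 1 (deriv V) (Ioo 0 1) :=
      (hV.mono hsub).deriv_of_isOpen isOpen_Ioo (by norm_num)
    have h2 : DifferentiableAt ℝ (deriv V) x :=
      (h1.differentiableOn (by norm_num)).differentiableAt (isOpen_Ioo.mem_nhds hx)
    have h3 : deriv (deriv V) x = Θ x / ν * deriv V x := by
      have := hODE x hx
      field_simp
      linarith
    exact h3 ▸ h2.hasDerivAt
  have hΘ' : ContinuousOn (fun x => Θ x / ν) (Ioo 0 1) := (hΘ.mono hsub).div_const ν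
  have hhalf : (1 / 2 : ℝ) ∈ Ioo (0 : ℝ) 1 := by constructor <;> norm_num
  have hG : ∀ x ∈ Ioo (0 : ℝ) 1,
      HasDerivAt (fun y => ∫ t in (1 / 2 : ℝ)..y, Θ t / ν) (Θ x / ν) x := by
    intro x hx
    apply intervalIntegral.integral_hasDerivAt_right
    · apply ContinuousOn.intervalIntegrable
      exact hΘ'.mono (ordConnected_Ioo.uIcc_subset hhalf hx)
    · exact hΘ'.stronglyMeasurableAtFilter isOpen_Ioo x hx
    · exact hΘ'.continuousAt (isOpen_Ioo.mem_nhds hx)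
  set G : ℝ → ℝ := fun y => ∫ t in (1 / 2 : ℝ)..y, Θ t / ν with hGdef
  have hE : ∀ x ∈ Ioo (0 : ℝ) 1, HasDerivAt (fun y => deriv V y * Real.exp (-G y)) 0 x := by
    intro x hx
    have := (hW x hx).mul ((hG x hx).neg.exp)
    refine this.congr_deriv ?_
    simp only [Pi.neg_apply]
    ring
  obtain ⟨C, hC⟩ : ∃ C : ℝ, ∀ x ∈ Ioo (0 : ℝ) 1, deriv V x * Real.exp (-G x) = C := by
    apply isOpen_Ioo.exists_is_const_of_deriv_eq_zero isPreconnected_Ioo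
    · exact fun x hx => (hE x hx).differentiableAt.differentiableWithinAt
    · exact fun x hx => (hE x hx).deriv
  have hmono : StrictMonoOn V (Ico 0 1) := by
    rcases lt_or_ge 0 C with h | h
    · apply strictMonoOn_of_deriv_pos (convex_Ico 0 1) hcont
      intro x hx
      rw [interior_Ico] at hx
      have := hC x hx
      exact pos_of_mul_pos_left (this ▸ h) (Real.exp_pos _).le
    · exfalso
      have hanti : AntitoneOn V (Ico 0 1) := by
        apply antitoneOn_of_deriv_nonpos (convex_Ico 0 1) hcont
        · rw [interior_Ico]
          exact (hV.mono hsub).differentiableOn (by norm_num)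
        · intro x hx
          rw [interior_Ico] at hx
          have h1 := hC x hx
          by_contra! h2
          have := mul_pos h2 (Real.exp_pos (-G x))
          linarith
      have : Vinf ≤ 0 := by
        apply le_of_tendsto hV1
        filter_upwards [Ioo_mem_nhdsLT (zero_lt_one (α := ℝ))] with x hx
        have := hanti (left_mem_Ico.2 zero_lt_one) (hsub hx) hx.1.le
        linarith
      linarith
  refine ⟨hmono, fun x hx => ⟨?_, ?_⟩⟩
  · have := hmono (left_mem_Ico.2 zero_lt_one) (hsub hx) hx.1
    linarith
  · obtain ⟨y, hxy, hy1⟩ := exists_between hx.2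
    have hy : y ∈ Ico (0 : ℝ) 1 := ⟨by linarith [hx.1], hy1⟩
    have h1 := hmono (hsub hx) hy hxy
    have h2 : V y ≤ Vinf := by
      apply ge_of_tendsto hV1
      filter_upwards [Ioo_mem_nhdsLT hy1] with z hz
      exact (hmono hy ⟨hy.1.trans hz.1.le, hz.2⟩ hz.1).le
    linarith
end

section
/- Let ν > 0, E₀ > 0, let H : [0,1] → ℝ be continuous with H(x) > 0 for all x ∈ [0,1), and let Θ ∈ C¹([0,1)) satisfy ν Θ'(x) = Θ(x)²/2 − (x/(1−x²)²)·(H(x) + E₀(1−x)) on [0,1) with Θ(0) = 0. Then Θ(x) < 0 for every x ∈ (0,1). -/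
open Set Filter

/-- If `E₀ > 0`, `H` is continuous and positive on `[0,1)`, and `Θ ∈ C¹([0,1))` solves the
Riccati equation `ν Θ' = Θ²/2 − (x/(1−x²)²)(H(x) + E₀(1−x))` with `Θ(0) = 0`, then
`Θ(x) < 0` on `(0,1)`. -/
theorem Theta_neg (ν E₀ : ℝ) (hν : 0 < ν) (hE₀ : 0 < E₀)
    (H : ℝ → ℝ) (hHcont : ContinuousOn H (Set.Icc 0 1))
    (hHpos : ∀ x ∈ Set.Ico (0 : ℝ) 1, 0 < H x)
    (Θ : ℝ → ℝ) (hΘreg : ContDiffOn ℝ 1 Θ (Set.Ico 0 1))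
    (hODE : ∀ x ∈ Set.Ico (0 : ℝ) 1,
      ν * deriv Θ x = Θ x ^ 2 / 2 - (x / (1 - x ^ 2) ^ 2) * (H x + E₀ * (1 - x)))
    (hΘ0 : Θ 0 = 0) :
    ∀ x ∈ Set.Ioo (0 : ℝ) 1, Θ x < 0 := by
  intro b hb
  have hsub : Icc (0 : ℝ) b ⊆ Ico 0 1 := fun y hy => ⟨hy.1, lt_of_le_of_lt hy.2 hb.2⟩
  have hc : ContinuousOn Θ (Icc 0 b) := hΘreg.continuousOn.mono hsub
  set F : ℝ → ℝ := IccExtend hb.1.le ((Icc 0 b).restrict Θ) with hF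
  have hFc : Continuous F := (continuousOn_iff_continuous_restrict.mp hc).Icc_extend'
  have hFe : ∀ y ∈ Icc (0 : ℝ) b, F y = Θ y := by
    intro y hy
    rw [hF, IccExtend_of_mem _ _ hy]
    rfl
  have hg : ∀ y, HasDerivAt (fun x => ∫ t in (0 : ℝ)..x, F t) (F y) y := fun y =>
    hFc.integral_hasStrictDerivAt 0 y |>.hasDerivAt
  set g : ℝ → ℝ := fun x => ∫ t in (0 : ℝ)..x, F t with hgdef
  have hgc : Continuous g := continuous_iff_continuousAt.mpr fun y => (hg y).continuousAt
  have hw : StrictAntiOn (fun x => Θ x * Real.exp (-(g x / (2 * ν)))) (Icc 0 b) := by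
    apply strictAntiOn_of_deriv_neg (convex_Icc 0 b)
    · exact hc.mul (by fun_prop)
    · intro x hx
      rw [interior_Icc] at hx
      have hx' : x ∈ Icc (0 : ℝ) b := ⟨hx.1.le, hx.2.le⟩
      have hx1 : x ∈ Ico (0 : ℝ) 1 := hsub hx'
      have hd : DifferentiableAt ℝ Θ x :=
        (hΘreg.differentiableOn (by norm_num)).differentiableAt (Ico_mem_nhds hx.1 hx1.2)
      have h1 := hd.hasDerivAt.mul (((hg x).div_const (2 * ν)).neg.exp)
      have h2 : deriv (fun x => Θ x * Real.exp (-(g x / (2 * ν)))) x = _ := h1.deriv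
      rw [h2, hFe x hx']
      have ho := hODE x hx1
      have hpos : 0 < (x / (1 - x ^ 2) ^ 2) * (H x + E₀ * (1 - x)) := by
        have h3 : 0 < 1 - x ^ 2 := by nlinarith [hx.1, hx1.2]
        have h4 := hHpos x hx1
        have h5 : 0 < 1 - x := by linarith [hx1.2]
        have h6 := hx.1
        positivity
      have he := Real.exp_pos (-(g x / (2 * ν)))
      have h7 : deriv Θ x - Θ x ^ 2 / (2 * ν) < 0 := by
        have : ν * (deriv Θ x - Θ x ^ 2 / (2 * ν)) < 0 := by
          have : ν * (deriv Θ x - Θ x ^ 2 / (2 * ν)) = ν * deriv Θ x - Θ x ^ 2 / 2 := by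
            field_simp
          rw [this]
          linarith
        by_contra hcon
        push Not at hcon
        nlinarith [mul_nonneg hν.le hcon]
      have h8 := mul_neg_of_neg_of_pos h7 he
      refine lt_of_eq_of_lt ?_ h8
      change deriv Θ x * Real.exp (-(g x / (2 * ν))) + Θ x * (Real.exp (-(g x / (2 * ν))) * -(Θ x / (2 * ν))) = _
      ring
  have hfin := hw ⟨le_rfl, hb.1.le⟩ ⟨hb.1.le, le_rfl⟩ hb.1
  simp only [hΘ0, zero_mul] at hfin
  have he := Real.exp_pos (-(g b / (2 * ν)))
  by_contra hcon
  push Not at hcon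
  nlinarith [mul_nonneg hcon he.le]
end

section
/- Let ν > 0, E₀ ∈ ℝ and β > 0 with β + E₀ > 0. Let H : [0,1] → ℝ be continuous with 0 ≤ H(x) ≤ β(1−x) for all x ∈ [0,1], and let Θ ∈ C¹([0,1)) satisfy ν Θ'(x) = Θ(x)²/2 − (x/(1−x²)²)·(H(x) + E₀(1−x)) on [0,1) with Θ(0) = 0. Then Θ(x) > −√(2(β + E₀)) · √(x − x²)/(1−x²) for every x ∈ (0,1). -/
open Set Filter

lemma left_lt_of_deriv_pos {f : ℝ → ℝ} {d p : ℝ} (h : HasDerivAt f d p) (hd : 0 < d) :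
    ∀ᶠ z in nhdsWithin p (Set.Iio p), f z < f p := by
  have h1 := (hasDerivWithinAt_iff_tendsto_slope' (s := Set.Iio p) (by simp)).1
    h.hasDerivWithinAt
  filter_upwards [h1.eventually (lt_mem_nhds hd), self_mem_nhdsWithin] with z hz hzp
  have hzp : z < p := hzp
  rw [slope_def_field] at hz
  by_contra hcon
  push Not at hcon
  have : (f z - f p) / (z - p) ≤ 0 :=
    div_nonpos_of_nonneg_of_nonpos (by linarith) (by linarith)
  linarith

lemma barrier_mono {B x y : ℝ} (hB : 0 < B) (hx : 0 < x) (hxy : x ≤ y) (hy : y < 1) :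
    B * x / ((1 - x) * (1 + x) ^ 2) ≤ B * y / ((1 - y) * (1 + y) ^ 2) := by
  have h1 : 0 < 1 - x := by linarith
  have h2 : 0 < 1 - y := by linarith
  have hy0 : 0 < y := by linarith
  rw [div_le_div_iff₀ (by positivity) (by positivity)]
  have : 0 ≤ B * ((y - x) * (1 + x * y * (1 + x + y))) := by
    have : 0 ≤ y - x := by linarith
    positivity
  nlinarith [this]

lemma barrier_deriv {B x : ℝ} (hB : 0 < B) (hx : 0 < x) (hx1 : x < 1) :
    ∃ d, 0 < d ∧ HasDerivAt (fun x : ℝ => B * x / ((1 - x) * (1 + x) ^ 2)) d x := by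
  have h1 : 0 < 1 - x := by linarith
  have hn : HasDerivAt (fun x : ℝ => B * x) B x := by
    simpa using (hasDerivAt_id x).const_mul B
  have ha : HasDerivAt (fun x : ℝ => 1 - x) (-1) x := by
    simpa using (hasDerivAt_id x).const_sub 1
  have hb : HasDerivAt (fun x : ℝ => (1 + x) ^ 2) (2 * (1 + x)) x := by
    simpa using ((hasDerivAt_id x).const_add 1).fun_pow 2
  refine ⟨_, ?_, hn.fun_div (ha.fun_mul hb) (by positivity)⟩
  apply div_pos _ (by positivity)
  have : 0 < B * (1 + x ^ 2 + 2 * x ^ 3) := by positivity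
  nlinarith [this]

/-- Lower bound for solutions of the Riccati equation: if `β + E₀ > 0`, `0 ≤ H(x) ≤ β(1−x)`
on `[0,1]`, and `Θ ∈ C¹([0,1))` solves `ν Θ' = Θ²/2 − (x/(1−x²)²)(H(x) + E₀(1−x))` with
`Θ(0) = 0`, then `Θ(x) > −√(2(β+E₀)) √(x−x²)/(1−x²)` on `(0,1)`. -/
theorem Theta_lower_bound (ν E₀ β : ℝ) (hν : 0 < ν) (hβ : 0 < β) (hβE : 0 < β + E₀)
    (H : ℝ → ℝ) (hHcont : ContinuousOn H (Set.Icc 0 1))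
    (hHbd : ∀ x ∈ Set.Icc (0 : ℝ) 1, 0 ≤ H x ∧ H x ≤ β * (1 - x))
    (Θ : ℝ → ℝ) (hΘreg : ContDiffOn ℝ 1 Θ (Set.Ico 0 1))
    (hODE : ∀ x ∈ Set.Ico (0 : ℝ) 1,
      ν * deriv Θ x = Θ x ^ 2 / 2 - (x / (1 - x ^ 2) ^ 2) * (H x + E₀ * (1 - x)))
    (hΘ0 : Θ 0 = 0) :
    ∀ x ∈ Set.Ioo (0 : ℝ) 1,
      -Real.sqrt (2 * (β + E₀)) * Real.sqrt (x - x ^ 2) / (1 - x ^ 2) < Θ x := by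
  have hdiff : ∀ x ∈ Set.Ioo (0 : ℝ) 1, HasDerivAt Θ (deriv Θ x) x := by
    intro x hx
    exact ((hΘreg.differentiableOn (by norm_num)).differentiableAt
      (Ico_mem_nhds hx.1 hx.2)).hasDerivAt
  set B := 2 * (β + E₀) with hBdef
  have hB : 0 < B := by positivity
  have hineq : ∀ x ∈ Set.Ioo (0 : ℝ) 1,
      Θ x ^ 2 / 2 - B * x / ((1 - x) * (1 + x) ^ 2) / 2 ≤ ν * deriv Θ x := by
    intro x hx
    obtain ⟨hx0, hx1⟩ := hx
    rw [hODE x ⟨hx0.le, hx1⟩]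
    have h1 : 0 < 1 - x := by linarith
    have hH := (hHbd x ⟨hx0.le, hx1.le⟩).2
    have e : B * x / ((1 - x) * (1 + x) ^ 2) / 2
        = (x / (1 - x ^ 2) ^ 2) * (β * (1 - x) + E₀ * (1 - x)) := by
      have : (1 - x ^ 2) = (1 - x) * (1 + x) := by ring
      rw [this, hBdef]
      field_simp
    rw [e]
    have : (x / (1 - x ^ 2) ^ 2) * (H x + E₀ * (1 - x))
        ≤ (x / (1 - x ^ 2) ^ 2) * (β * (1 - x) + E₀ * (1 - x)) := by
      gcongr
    linarith
  have strict : ∀ x ∈ Set.Ioo (0 : ℝ) 1, Θ x < 0 →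
      Θ x ^ 2 ≤ B * x / ((1 - x) * (1 + x) ^ 2) := by
    intro x hx hneg
    by_contra hcon
    push Not at hcon
    obtain ⟨p, hp, hmin⟩ := isCompact_Icc.exists_isMinOn (s := Set.Icc 0 x)
      ⟨0, by simp [hx.1.le]⟩
      (hΘreg.continuousOn.mono (fun y hy => ⟨hy.1, hy.2.trans_lt hx.2⟩))
    have hpx : Θ p ≤ Θ x := hmin (Set.right_mem_Icc.2 hx.1.le)
    have hp0 : 0 < p := by
      rcases hp.1.eq_or_lt with h | h
      · rw [← h, hΘ0] at hpx
        linarith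
      · exact h
    have hp1 : p < 1 := hp.2.trans_lt hx.2
    have hm := barrier_mono hB hp0 hp.2 hx.2
    have hi := hineq p ⟨hp0, hp1⟩
    have hsq : Θ x ^ 2 ≤ Θ p ^ 2 := by nlinarith
    have hd : 0 < deriv Θ p := by
      have : 0 < ν * deriv Θ p := by linarith
      exact (pos_iff_pos_of_mul_pos this).1 hν
    obtain ⟨z, hz, hz'⟩ := ((left_lt_of_deriv_pos (hdiff p ⟨hp0, hp1⟩) hd).and
      (Ioo_mem_nhdsLT hp0)).exists
    have : Θ p ≤ Θ z := hmin ⟨hz'.1.le, hz'.2.le.trans hp.2⟩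
    linarith
  intro x hx
  by_contra hcon
  push Not at hcon
  have hx0 : 0 < x := hx.1
  have h1 : 0 < 1 - x := by linarith [hx.2]
  have hxx : 0 < x - x ^ 2 := by nlinarith
  have hx2 : 0 < 1 - x ^ 2 := by nlinarith
  set w := Real.sqrt B * Real.sqrt (x - x ^ 2) / (1 - x ^ 2) with hw
  have hwpos : 0 < w := by
    have := Real.sqrt_pos.2 hB
    have := Real.sqrt_pos.2 hxx
    positivity
  have hw2 : w ^ 2 = B * x / ((1 - x) * (1 + x) ^ 2) := by
    rw [hw, div_pow, mul_pow, Real.sq_sqrt hB.le, Real.sq_sqrt hxx.le]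
    have : (1 - x ^ 2) = (1 - x) * (1 + x) := by ring
    rw [this]
    field_simp
  have hle : Θ x ≤ -w := by
    have : -Real.sqrt B * Real.sqrt (x - x ^ 2) / (1 - x ^ 2) = -w := by rw [hw]; ring
    linarith
  have hneg : Θ x < 0 := by linarith
  have hge : B * x / ((1 - x) * (1 + x) ^ 2) ≤ Θ x ^ 2 := by
    rw [← hw2]
    nlinarith
  have hd : 0 ≤ deriv Θ x := by
    have h := hineq x hx
    have : 0 ≤ ν * deriv Θ x := by linarith
    exact nonneg_of_mul_nonneg_right this hν
  obtain ⟨d, hdpos, hder⟩ := barrier_deriv hB hx0 hx.2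
  have hg := hder.sub ((hdiff x hx).pow 2)
  have hev := left_lt_of_deriv_pos hg (by
    have : 0 ≤ (-Θ x) * deriv Θ x := mul_nonneg (by linarith) hd
    norm_num
    nlinarith)
  have hevneg : ∀ᶠ z in nhdsWithin x (Set.Iio x), Θ z < 0 :=
    ((hdiff x hx).continuousAt.eventually (gt_mem_nhds hneg)).filter_mono nhdsWithin_le_nhds
  obtain ⟨z, ⟨hz1, hz2⟩, hz3⟩ := ((hev.and hevneg).and (Ioo_mem_nhdsLT hx0)).exists
  have hs := strict z ⟨hz3.1, hz3.2.trans hx.2⟩ hz2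
  simp only [Pi.sub_apply, Pi.pow_apply] at hz1
  linarith
end

section
/- Let ν > 0, V∞ > 0 and E₀ ∈ ℝ with E₀ + V∞²/2 > 0. Let H : [0,1] → ℝ be continuous with 0 ≤ H(x) ≤ (V∞²/2)(1−x) for all x ∈ [0,1], and let Θ ∈ C¹([0,1)) satisfy ν Θ'(x) = Θ(x)²/2 − (x/(1−x²)²)·(H(x) + E₀(1−x)) on [0,1) with Θ(0) = 0. Then, independently of ν, Θ(x) > −√(2E₀ + V∞²) · √(x(1−x))/(1−x²) for every x ∈ (0,1). -/
open Set Filter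

/-- Viscosity-independent lower bound: if `E₀ + V∞²/2 > 0`, `0 ≤ H(x) ≤ (V∞²/2)(1−x)` on
`[0,1]`, and `Θ ∈ C¹([0,1))` solves `ν Θ' = Θ²/2 − (x/(1−x²)²)(H(x) + E₀(1−x))` with
`Θ(0) = 0`, then `Θ(x) > −√(2E₀+V∞²) √(x(1−x))/(1−x²)` on `(0,1)`, independently of `ν`. -/
theorem Theta_lower_bound_uniform (ν Vinf E₀ : ℝ) (hν : 0 < ν) (hVinf : 0 < Vinf)
    (hE : 0 < E₀ + Vinf ^ 2 / 2)
    (H : ℝ → ℝ) (hHcont : ContinuousOn H (Set.Icc 0 1))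
    (hHbd : ∀ x ∈ Set.Icc (0 : ℝ) 1, 0 ≤ H x ∧ H x ≤ Vinf ^ 2 / 2 * (1 - x))
    (Θ : ℝ → ℝ) (hΘreg : ContDiffOn ℝ 1 Θ (Set.Ico 0 1))
    (hODE : ∀ x ∈ Set.Ico (0 : ℝ) 1,
      ν * deriv Θ x = Θ x ^ 2 / 2 - (x / (1 - x ^ 2) ^ 2) * (H x + E₀ * (1 - x)))
    (hΘ0 : Θ 0 = 0) :
    ∀ x ∈ Set.Ioo (0 : ℝ) 1,
      -Real.sqrt (2 * E₀ + Vinf ^ 2) * Real.sqrt (x * (1 - x)) / (1 - x ^ 2) < Θ x := by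
  set c : ℝ := 2 * E₀ + Vinf ^ 2 with hc
  have hcpos : 0 < c := by rw [hc]; linarith
  set G : ℝ → ℝ := fun x => x / ((1 - x) * (1 + x) ^ 2) with hG
  have hGmono : ∀ a b : ℝ, 0 ≤ a → a ≤ b → b < 1 → G a ≤ G b := by
    intro a b ha hab hb
    have h1 : 0 < (1 - a) * (1 + a) ^ 2 := mul_pos (by linarith) (by positivity)
    have h2 : 0 < (1 - b) * (1 + b) ^ 2 := by
      have : 0 < 1 + b := by linarith
      exact mul_pos (by linarith) (by positivity)
    simp only [hG]
    rw [div_le_div_iff₀ h1 h2]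
    have hb0 : 0 ≤ b := by linarith
    have h3 : 0 ≤ (b - a) * (1 + a * b + a * b * (a + b)) :=
      mul_nonneg (by linarith) (by positivity)
    nlinarith [h3]
  have hGnn : ∀ x : ℝ, 0 ≤ x → x < 1 → 0 ≤ G x := by
    intro x h0 h1
    have : 0 < 1 - x := by linarith
    simp only [hG]
    positivity
  have hGder : ∀ x : ℝ, 0 < x → x < 1 → ∃ d, 0 < d ∧ HasDerivAt G d x := by
    intro x h0 h1
    have h2 : 0 < 1 - x := by linarith
    have h3 : (1 - x) * (1 + x) ^ 2 ≠ 0 := by positivity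
    have hd := (hasDerivAt_id x).div
      (((hasDerivAt_id x).const_sub 1).mul (((hasDerivAt_id x).const_add 1).pow 2)) h3
    refine ⟨_, ?_, hd⟩
    apply div_pos
    · simp
      have : 0 < (1 + x) * (1 - x + 2 * x ^ 2) := by positivity
      nlinarith [this]
    · exact pow_pos (by simp; positivity) 2
  have hODE' : ∀ x ∈ Set.Ico (0 : ℝ) 1, Θ x ^ 2 / 2 - c * G x / 2 ≤ ν * deriv Θ x := by
    intro x hx
    rw [hODE x hx]
    obtain ⟨h0, h1⟩ := hx
    have hH := (hHbd x ⟨h0, h1.le⟩).2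
    have h2 : 0 < 1 - x := by linarith
    have h4 : (1 - x ^ 2) = (1 - x) * (1 + x) := by ring
    have h3 : c * G x / 2 = (x / (1 - x ^ 2) ^ 2) * ((c / 2) * (1 - x)) := by
      simp only [hG]
      rw [h4]
      field_simp
    rw [h3]
    have h5 : (x / (1 - x ^ 2) ^ 2) * (H x + E₀ * (1 - x))
        ≤ (x / (1 - x ^ 2) ^ 2) * ((c / 2) * (1 - x)) := by
      apply mul_le_mul_of_nonneg_left _ (by positivity)
      rw [hc]; linarith
    linarith
  have hΘd : ∀ x ∈ Set.Ioo (0 : ℝ) 1, DifferentiableAt ℝ Θ x := by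
    intro x hx
    exact ((hΘreg.differentiableOn (by norm_num)) x ⟨hx.1.le, hx.2⟩).differentiableAt
      (Ico_mem_nhds hx.1 hx.2)
  set B : ℝ → ℝ := fun x => -Real.sqrt (c * G x) with hB
  have hBsq : ∀ x : ℝ, 0 ≤ x → x < 1 → B x ^ 2 = c * G x := by
    intro x h0 h1
    simp only [hB, neg_sq]
    exact Real.sq_sqrt (mul_nonneg hcpos.le (hGnn x h0 h1))
  have hBnp : ∀ x, B x ≤ 0 := fun x => by simp [hB]
  have hBanti : ∀ a b : ℝ, 0 ≤ a → a ≤ b → b < 1 → B b ≤ B a := by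
    intro a b h1 h2 h3
    simp only [hB]
    exact neg_le_neg (Real.sqrt_le_sqrt (mul_le_mul_of_nonneg_left (hGmono a b h1 h2 h3) hcpos.le))
  have hGcont : ContinuousOn G (Set.Ico 0 1) := by
    apply ContinuousOn.div (by fun_prop) (by fun_prop)
    rintro x ⟨h0, h1⟩
    have : 0 < 1 - x := by linarith
    positivity
  have hBcont : ContinuousOn B (Set.Ico 0 1) :=
    ((continuousOn_const.mul hGcont).sqrt).neg
  -- weak inequality
  have hweak : ∀ x ∈ Set.Ioo (0 : ℝ) 1, B x ≤ Θ x := by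
    rintro x ⟨h0, h1⟩
    by_contra! hlt
    have hsub : Set.Icc 0 x ⊆ Set.Ico (0 : ℝ) 1 := fun y hy => ⟨hy.1, lt_of_le_of_lt hy.2 h1⟩
    have hcl : IsClosed {y | y ∈ Set.Icc 0 x ∧ B y ≤ Θ y} :=
      isClosed_Icc.isClosed_le (hBcont.mono hsub) (hΘreg.continuousOn.mono hsub)
    have hcomp : IsCompact {y | y ∈ Set.Icc 0 x ∧ B y ≤ Θ y} :=
      isCompact_Icc.of_isClosed_subset hcl (fun y hy => hy.1)
    obtain ⟨s, ⟨hs, hsΘ⟩, hmax⟩ := hcomp.exists_isGreatest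
      ⟨0, ⟨le_refl _, h0.le⟩, by rw [hΘ0]; exact hBnp 0⟩
    have hsub2 : Set.Icc s x ⊆ Set.Ico (0 : ℝ) 1 :=
      fun y hy => ⟨hs.1.trans hy.1, lt_of_le_of_lt hy.2 h1⟩
    have hmono : MonotoneOn Θ (Set.Icc s x) := by
      apply monotoneOn_of_deriv_nonneg (convex_Icc s x) (hΘreg.continuousOn.mono hsub2)
      · rw [interior_Icc]
        intro y hy
        exact (hΘd y ⟨hs.1.trans_lt hy.1, hy.2.trans h1⟩).differentiableWithinAt
      · rw [interior_Icc]
        intro y hy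
        have hy0 : 0 ≤ y := hs.1.trans hy.1.le
        have hy1 : y < 1 := hy.2.trans h1
        have hyB : Θ y < B y := by
          by_contra! hcon
          exact absurd (hmax ⟨⟨hy0, hy.2.le⟩, hcon⟩) (not_le.mpr hy.1)
        have := hODE' y ⟨hy0, hy1⟩
        rw [← hBsq y hy0 hy1] at this
        have h6 : 0 ≤ ν * deriv Θ y := by nlinarith [hBnp y]
        exact nonneg_of_mul_nonneg_right h6 hν
    have h7 := hmono ⟨le_refl _, hs.2⟩ ⟨hs.2, le_refl _⟩ hs.2
    have h8 := hBanti s x hs.1 hs.2 h1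
    linarith
  intro x hx
  have hx0 := hx.1
  have hx1 := hx.2
  have h2 : 0 < 1 - x := by linarith
  have hfin : -Real.sqrt c * Real.sqrt (x * (1 - x)) / (1 - x ^ 2) = B x := by
    have h3 : 0 < 1 - x ^ 2 := by nlinarith
    have h4 : c * G x = c * (x * (1 - x)) / (1 - x ^ 2) ^ 2 := by
      have h4 : (1 - x ^ 2) = (1 - x) * (1 + x) := by ring
      simp only [hG]
      rw [h4]
      field_simp
    simp only [hB]
    rw [h4, Real.sqrt_div (by positivity), Real.sqrt_sq h3.le, Real.sqrt_mul hcpos.le]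
    ring
  rw [hfin]
  refine lt_of_le_of_ne (hweak x hx) ?_
  intro heq
  have hmin : IsLocalMin (fun y => Θ y - B y) x := by
    filter_upwards [Ioo_mem_nhds hx0 hx1] with y hy
    have := hweak y hy
    linarith
  obtain ⟨d, hd, hGd⟩ := hGder x hx0 hx1
  have hGpos : 0 < G x := by simp only [hG]; positivity
  have hcG : 0 < c * G x := mul_pos hcpos hGpos
  have hBd : HasDerivAt B (-(c * d / (2 * Real.sqrt (c * G x)))) x :=
    ((hGd.const_mul c).sqrt hcG.ne').neg
  have hzero := hmin.hasDerivAt_eq_zero ((hΘd x hx).hasDerivAt.sub hBd)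
  have h9 := hODE' x ⟨hx0.le, hx1⟩
  rw [← hBsq x hx0.le hx1, heq, sub_self] at h9
  have h10 := nonneg_of_mul_nonneg_right h9 hν
  have h11 : 0 < c * d / (2 * Real.sqrt (c * G x)) := by
    have := Real.sqrt_pos.mpr hcG
    positivity
  linarith
end

section
/- Let V∞ > 0, let ν_k → 0 be a sequence of positive numbers, and for each k let Θ_{ν_k} : [0,1) → ℝ be continuous with Θ_{ν_k} ≤ 0; set G_{ν_k}(x) = ∫₀ˣ Θ_{ν_k}(s) ds and let π_{ν_k} be the Borel measure on [0,1) with Lebesgue density V∞ e^{G_{ν_k}(x)/ν_k} / ∫₀¹ e^{G_{ν_k}(t)/ν_k} dt. Assume G_{ν_k} → G uniformly on every compact subset of [0,1), where G is continuous, nonincreasing and G(0) = 0, and assume π_{ν_k} converges weak-* to a finite Borel measure π on [0,1). Then supp π ⊆ S := {x ∈ [0,1) : G(x) = 0}, i.e. the support of π is contained in the set where G attains its maximum value 0. -/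
open Set Filter MeasureTheory intervalIntegral

/-- `x` lies in the support of the measure `μ`: every open neighbourhood of `x` has positive
measure. -/
def MemSupport (μ : Measure ℝ) (x : ℝ) : Prop :=
  ∀ U : Set ℝ, IsOpen U → x ∈ U → 0 < μ U

/-- The support of the weak-* limit `π` of the probability-like measures
`π_ν = V∞ e^{G_ν/ν} dx / ∫₀¹ e^{G_ν/ν}` is contained in the set `S` where the (uniform on
compacts) limit `G` of the `G_ν` attains its maximum value `0`. -/
theorem support_subset_max_set (Vinf : ℝ) (hVinf : 0 < Vinf)
    (ν : ℕ → ℝ) (hν : ∀ k, 0 < ν k) (hν0 : Tendsto ν atTop (nhds 0))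
    (Θ : ℕ → ℝ → ℝ)
    (hΘcont : ∀ k, ContinuousOn (Θ k) (Set.Ico 0 1))
    (hΘneg : ∀ k, ∀ x ∈ Set.Ico (0 : ℝ) 1, Θ k x ≤ 0)
    (G : ℕ → ℝ → ℝ) (hG : ∀ k x, G k x = ∫ s in (0 : ℝ)..x, Θ k s)
    (π : ℕ → Measure ℝ)
    (hπ : ∀ k, π k = (volume.restrict (Set.Ico (0 : ℝ) 1)).withDensity
      (fun x => ENNReal.ofReal
        (Vinf * Real.exp (G k x / ν k) / ∫ t in (0 : ℝ)..1, Real.exp (G k t / ν k))))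
    (Glim : ℝ → ℝ)
    (hGlimCont : ContinuousOn Glim (Set.Ico 0 1))
    (hGlimAnti : AntitoneOn Glim (Set.Ico 0 1))
    (hGlim0 : Glim 0 = 0)
    (hGconv : ∀ K : Set ℝ, K ⊆ Set.Ico 0 1 → IsCompact K →
      TendstoUniformlyOn (fun k => G k) Glim atTop K)
    (πlim : Measure ℝ) (hfin : IsFiniteMeasure πlim)
    (hweak : ∀ f : ℝ → ℝ, Continuous f → HasCompactSupport f →
      Tendsto (fun k => ∫ x, f x ∂(π k)) atTop (nhds (∫ x, f x ∂πlim))) :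
    ∀ x ∈ Set.Ico (0 : ℝ) 1, MemSupport πlim x → Glim x = 0 := by
  intro x hx hsupp
  by_contra hne
  have hGx : Glim x < 0 := by
    have h := hGlimAnti (show (0:ℝ) ∈ Set.Ico (0:ℝ) 1 by simp) hx hx.1
    rw [hGlim0] at h
    exact lt_of_le_of_ne h hne
  have hx0 : 0 < x := by
    rcases hx.1.lt_or_eq with h | h
    · exact h
    · rw [← h] at hne; exact absurd hGlim0 hne
  obtain ⟨c, hc⟩ : ∃ c, c = - Glim x := ⟨_, rfl⟩
  have hcpos : 0 < c := by linarith
  rw [Metric.continuousOn_iff] at hGlimCont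
  obtain ⟨ε₁, hε₁, h1⟩ := hGlimCont 0 (by simp) (c / 8) (by positivity)
  obtain ⟨ε₂, hε₂, h2⟩ := hGlimCont x hx (c / 2) (by positivity)
  obtain ⟨δ, hδ0, hδ1, hδε⟩ : ∃ δ : ℝ, 0 < δ ∧ δ < 1 ∧ δ < ε₁ := by
    refine ⟨min ε₁ 1 / 2, by positivity, ?_, ?_⟩
    · linarith [min_le_right ε₁ 1]
    · linarith [min_le_left ε₁ 1]
  obtain ⟨a, ha0, hax, haε⟩ : ∃ a : ℝ, 0 < a ∧ a < x ∧ x - a < ε₂ := by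
    refine ⟨max (x - ε₂ / 2) (x / 2), lt_max_of_lt_right (by positivity),
      max_lt (by linarith) (by linarith), ?_⟩
    linarith [le_max_left (x - ε₂ / 2) (x / 2)]
  obtain ⟨b, hxb, hb1⟩ : ∃ b, x < b ∧ b < 1 := exists_between hx.2
  have hGa : ∀ y ∈ Set.Icc a b, Glim y ≤ - c / 2 := by
    intro y hy
    have h3 := h2 a ⟨ha0.le, by linarith⟩ (by rw [Real.dist_eq, abs_lt]; constructor <;> linarith)
    rw [Real.dist_eq, abs_lt] at h3
    have h4 := hGlimAnti (show a ∈ Set.Ico (0:ℝ) 1 from ⟨ha0.le, by linarith⟩)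
      (show y ∈ Set.Ico (0:ℝ) 1 from ⟨by linarith [hy.1], by linarith [hy.2]⟩) hy.1
    linarith
  have hGδ : ∀ y ∈ Set.Icc 0 δ, - c / 8 ≤ Glim y := by
    intro y hy
    have h3 := h1 y ⟨hy.1, by linarith [hy.2]⟩
      (by rw [Real.dist_eq, abs_lt]; constructor <;> linarith [hy.1, hy.2])
    rw [Real.dist_eq, abs_lt, hGlim0] at h3
    linarith
  have hu1 := Metric.tendstoUniformlyOn_iff.1 (hGconv (Set.Icc a b)
    (fun y hy => ⟨by linarith [hy.1], by linarith [hy.2]⟩) isCompact_Icc) (c / 8) (by positivity)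
  have hu2 := Metric.tendstoUniformlyOn_iff.1 (hGconv (Set.Icc 0 δ)
    (fun y hy => ⟨by linarith [hy.1], by linarith [hy.2]⟩) isCompact_Icc) (c / 8) (by positivity)
  -- density bound
  have hdens : ∀ᶠ k in atTop, ∀ y ∈ Set.Icc a b,
      Vinf * Real.exp (G k y / ν k) / (∫ t in (0 : ℝ)..1, Real.exp (G k t / ν k))
        ≤ Vinf / δ * Real.exp (- (c / 8) / ν k) := by
    filter_upwards [hu1, hu2] with k hk1 hk2 y hy
    have hνk := hν k
    by_cases hint : IntervalIntegrable (fun t => Real.exp (G k t / ν k)) volume 0 1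
    · have hD : δ * Real.exp (- (c / 4) / ν k) ≤ ∫ t in (0 : ℝ)..1, Real.exp (G k t / ν k) := by
        have hsub : Set.uIcc 0 δ ⊆ Set.uIcc (0:ℝ) 1 := by
          rw [Set.uIcc_of_le hδ0.le, Set.uIcc_of_le zero_le_one]
          exact Set.Icc_subset_Icc le_rfl hδ1.le
        calc δ * Real.exp (- (c / 4) / ν k) = ∫ t in (0:ℝ)..δ, Real.exp (- (c / 4) / ν k) := by
              simp
          _ ≤ ∫ t in (0:ℝ)..δ, Real.exp (G k t / ν k) := by
              refine intervalIntegral.integral_mono_on hδ0.le (by simp) (hint.mono_set hsub) ?_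
              intro t ht
              have h3 := hk2 t ht
              rw [Real.dist_eq, abs_lt] at h3
              have h4 := hGδ t ht
              apply Real.exp_le_exp.2
              apply div_le_div_of_nonneg_right _ hνk.le
              linarith
          _ ≤ _ := by
              refine intervalIntegral.integral_mono_interval le_rfl hδ0.le hδ1.le ?_ hint
              exact Filter.Eventually.of_forall fun t => (Real.exp_pos _).le
      have hN : Real.exp (G k y / ν k) ≤ Real.exp (- (3 * c / 8) / ν k) := by
        have h3 := hk1 y hy
        rw [Real.dist_eq, abs_lt] at h3
        have h4 := hGa y hy
        apply Real.exp_le_exp.2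
        apply div_le_div_of_nonneg_right _ hνk.le
        linarith
      have hsplit : Real.exp (- (3 * c / 8) / ν k)
          = Real.exp (- (c / 8) / ν k) * Real.exp (- (c / 4) / ν k) := by
        rw [← Real.exp_add]; congr 1; ring
      have hDpos : 0 < δ * Real.exp (- (c / 4) / ν k) := by positivity
      calc _ ≤ Vinf * Real.exp (- (3 * c / 8) / ν k) / (δ * Real.exp (- (c / 4) / ν k)) := by
            gcongr
        _ = _ := by
            rw [hsplit]
            have := (Real.exp_pos (- (c / 4) / ν k)).ne'
            field_simp
    · rw [intervalIntegral.integral_undef hint, div_zero]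
      positivity
  obtain ⟨f, hf⟩ : ∃ f : ℝ → ℝ, f = fun y => max 0 ((y - a) * (b - y)) := ⟨_, rfl⟩
  have hfc : Continuous f := by rw [hf]; fun_prop
  have hf0 : ∀ y, 0 ≤ f y := by intro y; rw [hf]; exact le_max_left _ _
  have hfout : ∀ y, y ∉ Set.Icc a b → f y = 0 := by
    intro y hy
    rw [hf]
    apply max_eq_left
    rw [Set.mem_Icc, not_and_or, not_le, not_le] at hy
    rcases hy with h | h <;> nlinarith
  have hfs : HasCompactSupport f := HasCompactSupport.intro isCompact_Icc (fun {y} hy => hfout y hy)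
  have hf1 : ∀ y ∈ Set.Icc a b, ‖f y‖ ≤ 1 := by
    intro y hy
    rw [Real.norm_of_nonneg (hf0 y), hf]
    apply max_le zero_le_one
    have := hy.1
    have := hy.2
    nlinarith
  have hbound : ∀ᶠ k in atTop, ‖∫ y, f y ∂(π k)‖ ≤ Vinf / δ * Real.exp (- (c / 8) / ν k) := by
    filter_upwards [hdens] with k hk
    have hB : 0 ≤ Vinf / δ * Real.exp (- (c / 8) / ν k) := by positivity
    have hm : π k (Set.Icc a b) ≤ ENNReal.ofReal (Vinf / δ * Real.exp (- (c / 8) / ν k)) := by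
      rw [hπ k, withDensity_apply _ measurableSet_Icc]
      calc _ ≤ ∫⁻ y in Set.Icc a b, ENNReal.ofReal (Vinf / δ * Real.exp (- (c / 8) / ν k))
              ∂(volume.restrict (Set.Ico (0 : ℝ) 1)) := by
            refine setLIntegral_mono' measurableSet_Icc ?_
            intro y hy
            exact ENNReal.ofReal_le_ofReal (hk y hy)
        _ ≤ _ := by
            rw [setLIntegral_const]
            refine mul_le_of_le_one_right' ?_
            refine (measure_mono (Set.subset_univ _)).trans ?_
            simp
    have heq : ∫ y, f y ∂(π k) = ∫ y in Set.Icc a b, f y ∂(π k) :=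
      (setIntegral_eq_integral_of_forall_compl_eq_zero hfout).symm
    rw [heq]
    refine (norm_setIntegral_le_of_norm_le_const (lt_of_le_of_lt hm ENNReal.ofReal_lt_top)
      hf1).trans ?_
    rw [one_mul]
    exact ENNReal.toReal_le_of_le_ofReal hB hm
  have hlim0 : Tendsto (fun k => Vinf / δ * Real.exp (- (c / 8) / ν k)) atTop (nhds 0) := by
    have h3 : Tendsto ν atTop (nhdsWithin 0 (Set.Ioi 0)) :=
      tendsto_nhdsWithin_iff.2 ⟨hν0, Filter.Eventually.of_forall hν⟩
    have h4 := (tendsto_inv_nhdsGT_zero.comp h3).const_mul_atTop_of_neg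
      (show - (c / 8) < 0 by linarith)
    have h5 := (Real.tendsto_exp_atBot.comp h4).const_mul (Vinf / δ)
    rw [mul_zero] at h5
    exact h5
  have hzero : ∫ y, f y ∂πlim = 0 :=
    tendsto_nhds_unique (hweak f hfc hfs) (squeeze_zero_norm' hbound hlim0)
  have hae := (integral_eq_zero_iff_of_nonneg (fun y => hf0 y)
    (hfc.integrable_of_hasCompactSupport hfs)).1 hzero
  have hpos := hsupp (Set.Ioo a b) isOpen_Ioo ⟨hax, hxb⟩
  refine hpos.ne' (measure_mono_null ?_ (ae_iff.1 hae))
  intro y hy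
  have : 0 < f y := by
    rw [hf]
    exact lt_max_of_lt_right (mul_pos (by linarith [hy.1]) (by linarith [hy.2]))
  exact this.ne'
end

section
/- Let V∞ > 0, let ν_k → 0 be a sequence of positive numbers, and for each k let Θ_{ν_k} : [0,1) → ℝ be continuous with Θ_{ν_k} ≤ 0; set G_{ν_k}(x) = ∫₀ˣ Θ_{ν_k}(s) ds (so each G_{ν_k} is nonincreasing) and let π_{ν_k} be the Borel measure on [0,1) with Lebesgue density V∞ e^{G_{ν_k}(x)/ν_k} / ∫₀¹ e^{G_{ν_k}(t)/ν_k} dt. Assume π_{ν_k} converges weak-* to a finite Borel measure π on [0,1). If x̄ ∈ supp π and x̄ > 0, then every point x₀ with 0 < x₀ < x̄ also belongs to supp π. -/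
open Set Filter MeasureTheory intervalIntegral

/-- Structure of the support of the weak-* limit `π` of the measures
`π_ν = V∞ e^{G_ν/ν} dx / ∫₀¹ e^{G_ν/ν}` with `G_ν(x) = ∫₀ˣ Θ_ν ≤ 0` nonincreasing:
if a point `x̄ > 0` belongs to the support of `π`, then so does every `x₀ ∈ (0, x̄)`. -/
theorem support_is_interval (Vinf : ℝ) (hVinf : 0 < Vinf)
    (ν : ℕ → ℝ) (hν : ∀ k, 0 < ν k) (hν0 : Tendsto ν atTop (nhds 0))
    (Θ : ℕ → ℝ → ℝ)
    (hΘcont : ∀ k, ContinuousOn (Θ k) (Set.Ico 0 1))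
    (hΘneg : ∀ k, ∀ x ∈ Set.Ico (0 : ℝ) 1, Θ k x ≤ 0)
    (G : ℕ → ℝ → ℝ) (hG : ∀ k x, G k x = ∫ s in (0 : ℝ)..x, Θ k s)
    (π : ℕ → Measure ℝ)
    (hπ : ∀ k, π k = (volume.restrict (Set.Ico (0 : ℝ) 1)).withDensity
      (fun x => ENNReal.ofReal
        (Vinf * Real.exp (G k x / ν k) / ∫ t in (0 : ℝ)..1, Real.exp (G k t / ν k))))
    (πlim : Measure ℝ) (hfin : IsFiniteMeasure πlim)
    (hweak : ∀ f : ℝ → ℝ, Continuous f → HasCompactSupport f →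
      Tendsto (fun k => ∫ x, f x ∂(π k)) atTop (nhds (∫ x, f x ∂πlim)))
    (xbar : ℝ) (hxbar : 0 < xbar) (hmem : MemSupport πlim xbar) :
    ∀ x₀ : ℝ, 0 < x₀ → x₀ < xbar → MemSupport πlim x₀ := by
  intro x₀ hx₀ hlt U hU hxU
  obtain ⟨ε, hε, hball⟩ := Metric.isOpen_iff.1 hU x₀ hxU
  obtain ⟨r, hr, hrε, hrx⟩ : ∃ r : ℝ, 0 < r ∧ r ≤ ε ∧ r ≤ x₀ :=
    ⟨min ε x₀, lt_min hε hx₀, min_le_left _ _, min_le_right _ _⟩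
  have hfc : ∀ a : ℝ, Continuous (fun x : ℝ => max 0 (r - |x - a|)) := by
    intro a; fun_prop
  have hfs : ∀ a : ℝ, HasCompactSupport (fun x : ℝ => max 0 (r - |x - a|)) := by
    intro a
    refine HasCompactSupport.intro (isCompact_closedBall a r) ?_
    intro x hx
    rw [Metric.mem_closedBall, Real.dist_eq, not_le] at hx
    exact max_eq_left (by linarith)
  have key : ∀ k, ∫ x, max 0 (r - |x - xbar|) ∂(π k) ≤ ∫ x, max 0 (r - |x - x₀|) ∂(π k) := by
    intro k
    have hint : ∀ x ∈ Set.Ico (0 : ℝ) 1, ∀ y ∈ Set.Ico (0 : ℝ) 1, x ≤ y →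
        IntervalIntegrable (Θ k) volume x y := by
      intro x hx y hy hxy
      apply ContinuousOn.intervalIntegrable_of_Icc hxy
      exact (hΘcont k).mono (fun z hz => ⟨hx.1.trans hz.1, hz.2.trans_lt hy.2⟩)
    have hGanti : ∀ x ∈ Set.Ico (0 : ℝ) 1, ∀ y ∈ Set.Ico (0 : ℝ) 1, x ≤ y → G k y ≤ G k x := by
      intro x hx y hy hxy
      have h0 : (0 : ℝ) ∈ Set.Ico (0 : ℝ) 1 := ⟨le_rfl, one_pos⟩
      have h1 := integral_add_adjacent_intervals (hint 0 h0 x hx hx.1) (hint x hx y hy hxy)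
      have h2 : ∫ s in x..y, Θ k s ≤ ∫ s in x..y, (0 : ℝ) := by
        apply intervalIntegral.integral_mono_on hxy (hint x hx y hy hxy) (by simp)
        intro z hz
        exact hΘneg k z ⟨hx.1.trans hz.1, hz.2.trans_lt hy.2⟩
      rw [intervalIntegral.integral_zero] at h2
      rw [hG, hG, ← h1]; linarith
    have hG0 : G k 0 = 0 := by rw [hG]; simp
    obtain ⟨Z, hZdef⟩ : ∃ Z, Z = ∫ t in (0 : ℝ)..1, Real.exp (G k t / ν k) := ⟨_, rfl⟩
    have hZ : 0 ≤ Z := by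
      rw [hZdef]
      exact intervalIntegral.integral_nonneg zero_le_one (fun u _ => (Real.exp_pos _).le)
    obtain ⟨d, hd⟩ : ∃ d : ℝ → ℝ, d = fun x => Vinf * Real.exp (G k x / ν k) / Z := ⟨_, rfl⟩
    have hd0 : ∀ x, 0 ≤ d x := by intro x; rw [hd]; positivity
    have hdanti : AntitoneOn d (Set.Ico 0 1) := by
      intro x hx y hy hxy
      rw [hd]
      have := hGanti x hx y hy hxy
      have := (hν k).le
      dsimp only
      gcongr
    have hdm : AEMeasurable d (volume.restrict (Set.Ico (0 : ℝ) 1)) :=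
      aemeasurable_restrict_of_antitoneOn measurableSet_Ico hdanti
    obtain ⟨g, hg⟩ : ∃ g : ℝ → ℝ, g = (Set.Ico (0 : ℝ) 1).indicator d := ⟨_, rfl⟩
    have hgm : AEStronglyMeasurable g volume := by
      rw [hg]
      exact ((aemeasurable_indicator_iff measurableSet_Ico).2 hdm).aestronglyMeasurable
    have hg0 : ∀ x, 0 ≤ g x := by
      intro x; rw [hg]; exact Set.indicator_nonneg (fun x _ => hd0 x) x
    have hgb : ∀ x, ‖g x‖ ≤ d 0 := by
      intro x
      rw [Real.norm_of_nonneg (hg0 x), hg]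
      by_cases hx : x ∈ Set.Ico (0 : ℝ) 1
      · rw [Set.indicator_of_mem hx]
        exact hdanti ⟨le_rfl, one_pos⟩ hx hx.1
      · rw [Set.indicator_of_notMem hx]; exact hd0 0
    have hganti : ∀ x y, 0 ≤ x → x ≤ y → g y ≤ g x := by
      intro x y hx hxy
      by_cases hy : y < 1
      · rw [hg, Set.indicator_of_mem (show y ∈ Set.Ico (0 : ℝ) 1 from ⟨hx.trans hxy, hy⟩),
          Set.indicator_of_mem (show x ∈ Set.Ico (0 : ℝ) 1 from ⟨hx, hxy.trans_lt hy⟩)]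
        exact hdanti ⟨hx, hxy.trans_lt hy⟩ ⟨hx.trans hxy, hy⟩ hxy
      · have : g y = 0 := by
          rw [hg]; exact Set.indicator_of_notMem (fun h => hy h.2) _
        rw [this]; exact hg0 x
    have hform : ∀ f : ℝ → ℝ, ∫ x, f x ∂(π k) = ∫ x, g x * f x := by
      intro f
      rw [hπ k, ← hZdef]
      rw [show (fun x => ENNReal.ofReal (Vinf * Real.exp (G k x / ν k) / Z))
        = fun x => ENNReal.ofReal (d x) by rw [hd]]
      rw [integral_withDensity_eq_integral_toReal_smul₀ hdm.ennreal_ofReal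
        (by simp), ← MeasureTheory.integral_indicator measurableSet_Ico]
      congr 1
      ext x
      rw [hg]
      by_cases hx : x ∈ Set.Ico (0 : ℝ) 1
      · simp only [Set.indicator_of_mem hx, ENNReal.toReal_ofReal (hd0 x), smul_eq_mul]
      · simp only [Set.indicator_of_notMem hx, zero_mul]
    have hI : ∀ a : ℝ, Integrable (fun x => g x * max 0 (r - |x - a|)) volume := by
      intro a
      exact ((hfc a).integrable_of_hasCompactSupport (hfs a)).bdd_mul hgm
        (Eventually.of_forall hgb)
    rw [hform, hform, ← integral_add_right_eq_self _ (xbar - x₀)]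
    apply integral_mono ((hI xbar).comp_add_right (xbar - x₀)) (hI x₀)
    intro x
    dsimp only
    rw [show x + (xbar - x₀) - xbar = x - x₀ by ring]
    by_cases hx : 0 ≤ x
    · exact mul_le_mul_of_nonneg_right (hganti _ _ hx (by linarith)) (le_max_left _ _)
    · have : max 0 (r - |x - x₀|) = 0 := by
        apply max_eq_left
        have := neg_le_abs (x - x₀)
        linarith
      rw [this]; simp
  have hle := le_of_tendsto_of_tendsto' (hweak _ (hfc xbar) (hfs xbar))
    (hweak _ (hfc x₀) (hfs x₀)) key
  have hpos : 0 < ∫ x, max 0 (r - |x - xbar|) ∂πlim := by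
    have hnn : (0 : ℝ → ℝ) ≤ fun x => max 0 (r - |x - xbar|) := fun x => le_max_left _ _
    rw [integral_pos_iff_support_of_nonneg hnn
      ((hfc xbar).integrable_of_hasCompactSupport (hfs xbar))]
    apply hmem _ (hfc xbar).isOpen_support
    simp [hr.le, hr.ne']
  rw [pos_iff_ne_zero]
  intro hU0
  have hz : ∫ x, max 0 (r - |x - x₀|) ∂πlim = 0 := by
    apply integral_eq_zero_of_ae
    filter_upwards [measure_eq_zero_iff_ae_notMem.1 hU0] with x hx
    apply max_eq_left
    by_contra hcon
    apply hx
    apply hball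
    rw [Metric.mem_ball, Real.dist_eq]
    linarith
  linarith
end

section
/- Let V∞ > 0, E₀ ∈ ℝ with E₀ + V∞²/2 > 0, and let {(Θ_ν, V_ν)}_{ν>0} be a family of solutions of the reduced self-similar Navier–Stokes system satisfying the uniform bound (B). Assume in addition that along a sequence ν_k → 0 the functions Θ_{ν_k} converge almost everywhere on (0,1) to a function Θ and V_{ν_k} converge almost everywhere to a function V. Then the limit is the explicit stationary self-similar Euler solution with negative stream function: V(x) = V∞ for every x ∈ (0,1), and Θ(x) = −√(V∞² + 2E₀) · √(x(1−x))/(1−x²) for every x ∈ (0,1); in particular Θ(x) < 0 on (0,1) and Θ²/2 = F(V;x) holds on (0,1). -/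
open Set Filter MeasureTheory intervalIntegral

/-- The functional `H(V;x) = ∫ₓ¹ ((1−t²)/t²) (∫₀ᵗ (σ/(1−σ²)²) V(σ)² dσ) dt`. -/
noncomputable def Hfun (V : ℝ → ℝ) (x : ℝ) : ℝ :=
  ∫ t in x..1, ((1 - t ^ 2) / t ^ 2) * ∫ σ in (0 : ℝ)..t, (σ / (1 - σ ^ 2) ^ 2) * V σ ^ 2

/-- The functional `F(V;x) = (x/(1−x²)²)(H(V;x) + E₀(1−x))`. -/
noncomputable def Ffun (E₀ : ℝ) (V : ℝ → ℝ) (x : ℝ) : ℝ :=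
  (x / (1 - x ^ 2) ^ 2) * (Hfun V x + E₀ * (1 - x))

/-- A solution of the reduced self-similar Navier–Stokes system with viscosity `ν`, pressure
constant `E₀` and swirl `V∞` at the vortex line: `Θ ∈ C¹([0,1))`, `V ∈ C²([0,1))`,
`ν Θ' = Θ²/2 − F(V;x)` and `ν V'' = Θ V'` on `(0,1)`, `Θ(0) = V(0) = 0` and `V → V∞` as
`x → 1⁻`. -/
structure IsNSSolution (ν E₀ Vinf : ℝ) (Θ V : ℝ → ℝ) : Prop where
  hΘreg : ContDiffOn ℝ 1 Θ (Set.Ico 0 1)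
  hVreg : ContDiffOn ℝ 2 V (Set.Ico 0 1)
  hΘeq : ∀ x ∈ Set.Ioo (0 : ℝ) 1, ν * deriv Θ x = Θ x ^ 2 / 2 - Ffun E₀ V x
  hVeq : ∀ x ∈ Set.Ioo (0 : ℝ) 1, ν * deriv (deriv V) x = Θ x * deriv V x
  hΘ0 : Θ 0 = 0
  hV0 : V 0 = 0
  hV1 : Tendsto V (nhdsWithin 1 (Set.Iio 1)) (nhds Vinf)

/-- The uniform bound (B): `−√(2E₀+V∞²) √(x(1−x))/(1−x²) < Θ(x) < 0` on `(0,1)`. -/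
def BoundB (E₀ Vinf : ℝ) (Θ : ℝ → ℝ) : Prop :=
  ∀ x ∈ Set.Ioo (0 : ℝ) 1,
    -Real.sqrt (2 * E₀ + Vinf ^ 2) * Real.sqrt (x * (1 - x)) / (1 - x ^ 2) < Θ x ∧ Θ x < 0

/-- Basic properties of solutions. -/
lemma sol_props {ν E₀ Vinf : ℝ} {Θ V : ℝ → ℝ} (hV : 0 < Vinf) (hν : 0 < ν)
    (hs : IsNSSolution ν E₀ Vinf Θ V) (hΘneg : ∀ x ∈ Ioo (0:ℝ) 1, Θ x < 0) :
    MonotoneOn V (Ico 0 1) ∧ (∀ x ∈ Ico (0:ℝ) 1, V x ≤ Vinf) ∧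
    (∀ x ∈ Ioo (0:ℝ) 1, Vinf * x ≤ V x) ∧
    (∀ x y, 0 < x → x < y → y < 1 →
      Vinf - V y ≤ Vinf / x * Real.exp ((∫ t in x..y, Θ t) / ν)) := by
  have hVc : ContinuousOn V (Ico 0 1) := hs.hVreg.continuousOn
  have hΘc : ContinuousOn Θ (Ico 0 1) := hs.hΘreg.continuousOn
  have hnhds : ∀ x ∈ Ioo (0:ℝ) 1, Ico (0:ℝ) 1 ∈ nhds x := fun x hx => Ico_mem_nhds hx.1 hx.2
  have hVd : ∀ x ∈ Ioo (0:ℝ) 1, HasDerivAt V (deriv V x) x := fun x hx =>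
    ((hs.hVreg.contDiffAt (hnhds x hx)).differentiableAt (by norm_num)).hasDerivAt
  have hwd : ∀ x ∈ Ioo (0:ℝ) 1, HasDerivAt (deriv V) (Θ x * deriv V x / ν) x := by
    intro x hx
    have h2 : ContDiffOn ℝ 2 V (Ioo 0 1) := hs.hVreg.mono Ioo_subset_Ico_self
    have h1 : ContDiffOn ℝ 1 (deriv V) (Ioo 0 1) :=
      ((contDiffOn_succ_iff_deriv_of_isOpen (n := 1) isOpen_Ioo).1
        (by simpa [one_add_one_eq_two] using h2)).2.2
    have h := ((h1.contDiffAt (isOpen_Ioo.mem_nhds hx)).differentiableAt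
      (by norm_num)).hasDerivAt
    have e := hs.hVeq x hx
    rw [← e, mul_div_cancel_left₀ _ hν.ne']
    exact h
  have hTint : ∀ x ∈ Ioo (0:ℝ) 1, ∀ y ∈ Ioo (0:ℝ) 1, IntervalIntegrable Θ volume x y := by
    intro x hx y hy
    apply ContinuousOn.intervalIntegrable
    exact hΘc.mono ((convex_Ioo (0:ℝ) 1).ordConnected.uIcc_subset hx hy |>.trans Ioo_subset_Ico_self)
  have hhalf : (1/2:ℝ) ∈ Ioo (0:ℝ) 1 := by constructor <;> norm_num
  have hAd : ∀ x ∈ Ioo (0:ℝ) 1, HasDerivAt (fun x => ∫ t in (1/2:ℝ)..x, Θ t) (Θ x) x := by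
    intro x hx
    have hcx : ContinuousAt Θ x := hΘc.continuousAt (hnhds x hx)
    refine intervalIntegral.integral_hasDerivAt_right (hTint _ hhalf _ hx) ?_ hcx
    exact (hΘc.mono Ioo_subset_Ico_self).stronglyMeasurableAtFilter isOpen_Ioo x hx
  have hgd : ∀ x ∈ Ioo (0:ℝ) 1,
      HasDerivAt (fun x => deriv V x * Real.exp (-(∫ t in (1/2:ℝ)..x, Θ t) / ν)) 0 x := by
    intro x hx
    have h := (hwd x hx).mul (((hAd x hx).neg.div_const ν).exp)
    convert! h using 1
    field_simp
    ring
  have hconst : ∀ x ∈ Ioo (0:ℝ) 1, ∀ y ∈ Ioo (0:ℝ) 1,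
      deriv V y = deriv V x * Real.exp ((∫ t in x..y, Θ t) / ν) := by
    intro x hx y hy
    have h := isOpen_Ioo.is_const_of_deriv_eq_zero (𝕜 := ℝ) (isPreconnected_Ioo)
      (fun z hz => (hgd z hz).differentiableAt.differentiableWithinAt)
      (fun z hz => (hgd z hz).deriv) hx hy
    beta_reduce at h
    have h2 : (∫ t in (1/2:ℝ)..y, Θ t) = (∫ t in (1/2:ℝ)..x, Θ t) + ∫ t in x..y, Θ t :=
      (intervalIntegral.integral_add_adjacent_intervals (hTint _ hhalf _ hx) (hTint _ hx _ hy)).symm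
    have h3 : Real.exp (-(∫ t in (1/2:ℝ)..x, Θ t) / ν) =
        Real.exp (-(∫ t in (1/2:ℝ)..y, Θ t) / ν) * Real.exp ((∫ t in x..y, Θ t) / ν) := by
      rw [← Real.exp_add, h2]; congr 1; ring
    rw [h3] at h
    have h4 := Real.exp_pos (-(∫ t in (1/2:ℝ)..y, Θ t) / ν)
    have h5 : Real.exp (-(∫ t in (1/2:ℝ)..y, Θ t) / ν) *
      (deriv V x * Real.exp ((∫ t in x..y, Θ t) / ν) - deriv V y) = 0 := by linarith
    rcases mul_eq_zero.1 h5 with h6 | h6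
    · exact absurd h6 h4.ne'
    · linarith
  have hmem : Ico (0:ℝ) 1 ∈ nhdsWithin 1 (Iio 1) := Ico_mem_nhdsLT (by norm_num)
  have hcpos : 0 < deriv V (1/2) := by
    by_contra hc
    push Not at hc
    have hanti : AntitoneOn V (Ico 0 1) := by
      apply antitoneOn_of_deriv_nonpos (convex_Ico 0 1) hVc
      · rw [interior_Ico]
        exact fun z hz => (hVd z hz).differentiableAt.differentiableWithinAt
      · rw [interior_Ico]
        intro z hz
        rw [hconst _ hhalf z hz]
        exact mul_nonpos_of_nonpos_of_nonneg hc (Real.exp_pos _).le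
    have : Vinf ≤ 0 := by
      refine le_of_tendsto hs.hV1 ?_
      filter_upwards [hmem] with z hz
      have := hanti (left_mem_Ico.2 one_pos) hz hz.1
      rwa [hs.hV0] at this
    linarith
  have hwpos : ∀ x ∈ Ioo (0:ℝ) 1, 0 < deriv V x := by
    intro x hx
    rw [hconst _ hhalf x hx]
    exact mul_pos hcpos (Real.exp_pos _)
  have hmono : MonotoneOn V (Ico 0 1) := by
    apply monotoneOn_of_deriv_nonneg (convex_Ico 0 1) hVc
    · rw [interior_Ico]
      exact fun z hz => (hVd z hz).differentiableAt.differentiableWithinAt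
    · rw [interior_Ico]
      exact fun z hz => (hwpos z hz).le
  have hle : ∀ x ∈ Ico (0:ℝ) 1, V x ≤ Vinf := by
    intro x hx
    refine ge_of_tendsto hs.hV1 ?_
    filter_upwards [Ico_mem_nhdsLT hx.2] with z hz
    exact hmono hx ⟨hx.1.trans hz.1, hz.2⟩ hz.1
  have hwanti : ∀ x y, 0 < x → x ≤ y → y < 1 → deriv V y ≤ deriv V x := by
    intro x y hx hxy hy
    have hx' : x ∈ Ioo (0:ℝ) 1 := ⟨hx, hxy.trans_lt hy⟩
    rw [hconst x hx' y ⟨hx.trans_le hxy, hy⟩]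
    have : (∫ t in x..y, Θ t) ≤ 0 := by
      have h := intervalIntegral.integral_nonneg (μ := volume) (f := fun t => -Θ t) hxy
        (fun u hu => neg_nonneg.2 (hΘneg u ⟨hx.trans_le hu.1, hu.2.trans_lt hy⟩).le)
      rw [intervalIntegral.integral_neg] at h
      linarith
    have : Real.exp ((∫ t in x..y, Θ t) / ν) ≤ 1 := by
      rw [Real.exp_le_one_iff]
      exact div_nonpos_of_nonpos_of_nonneg this hν.le
    exact mul_le_of_le_one_right (hwpos x hx').le this
  have hwx : ∀ x ∈ Ioo (0:ℝ) 1, deriv V x * x ≤ V x := by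
    intro x hx
    obtain ⟨c, hc, hce⟩ := exists_hasDerivAt_eq_slope V (deriv V) hx.1
      (hVc.mono fun z hz => ⟨hz.1, hz.2.trans_lt hx.2⟩)
      (fun z hz => hVd z ⟨hz.1, hz.2.trans hx.2⟩)
    have := hwanti c x hc.1 hc.2.le hx.2
    rw [hce, hs.hV0, sub_zero, sub_zero, le_div_iff₀ hx.1] at this
    exact this
  have hw1 : ∀ x ∈ Ioo (0:ℝ) 1, Vinf - V x ≤ deriv V x * (1 - x) := by
    intro x hx
    have : Vinf ≤ V x + deriv V x * (1 - x) := by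
      refine le_of_tendsto hs.hV1 ?_
      filter_upwards [Ioo_mem_nhdsLT hx.2] with z hz
      obtain ⟨c, hc, hce⟩ := exists_hasDerivAt_eq_slope V (deriv V) hz.1
        (hVc.mono fun u hu => ⟨hx.1.le.trans hu.1, hu.2.trans_lt hz.2⟩)
        (fun u hu => hVd u ⟨hx.1.trans hu.1, hu.2.trans hz.2⟩)
      have h1 := hwanti x c hx.1 hc.1.le (hc.2.trans hz.2)
      rw [hce, div_le_iff₀ (sub_pos.2 hz.1)] at h1
      have := mul_le_mul_of_nonneg_left (sub_le_sub_right hz.2.le x) (hwpos x hx).le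
      linarith
    linarith
  refine ⟨hmono, hle, ?_, ?_⟩
  · intro x hx
    have h1 := mul_le_mul_of_nonneg_left (hw1 x hx) hx.1.le
    have h2 := mul_le_mul_of_nonneg_right (hwx x hx) (sub_nonneg.2 hx.2.le)
    nlinarith
  · intro x y hx hxy hy
    have hx' : x ∈ Ioo (0:ℝ) 1 := ⟨hx, hxy.trans hy⟩
    have hy' : y ∈ Ioo (0:ℝ) 1 := ⟨hx.trans hxy, hy⟩
    have h1 : deriv V x ≤ Vinf / x := by
      rw [le_div_iff₀ hx]
      exact (hwx x hx').trans (hle x ⟨hx.le, hx'.2⟩)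
    have h2 := hconst x hx' y hy'
    have h3 := mul_le_mul_of_nonneg_right h1 (Real.exp_pos ((∫ t in x..y, Θ t) / ν)).le
    have h4 := hw1 y hy'
    have h5 := mul_le_of_le_one_right (hwpos y hy').le (show 1 - y ≤ 1 by linarith [hy'.1])
    linarith

/-- The integrand of `Hfun`. -/
noncomputable def Wf (V : ℝ → ℝ) (t : ℝ) : ℝ :=
  ((1 - t ^ 2) / t ^ 2) * ∫ σ in (0 : ℝ)..t, (σ / (1 - σ ^ 2) ^ 2) * V σ ^ 2

lemma one_sub_sq_pos {x : ℝ} (h0 : 0 ≤ x) (h1 : x < 1) : 0 < 1 - x ^ 2 := by nlinarith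

lemma ker_cont : ContinuousOn (fun σ : ℝ => σ / (1 - σ ^ 2) ^ 2) (Ico 0 1) := by
  apply ContinuousOn.div (by fun_prop) (by fun_prop)
  intro x hx
  have := one_sub_sq_pos hx.1 hx.2
  positivity

lemma ker_nonneg {x : ℝ} (h0 : 0 ≤ x) : 0 ≤ x / (1 - x ^ 2) ^ 2 := by positivity

lemma ker_integral {s t : ℝ} (hs : 0 ≤ s) (hst : s ≤ t) (ht : t < 1) :
    ∫ σ in s..t, (σ / (1 - σ ^ 2) ^ 2) = t ^ 2 / (2 * (1 - t ^ 2)) - s ^ 2 / (2 * (1 - s ^ 2)) := by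
  have hsub : uIcc s t ⊆ Ico 0 1 := by
    rw [uIcc_of_le hst]; exact fun z hz => ⟨hs.trans hz.1, hz.2.trans_lt ht⟩
  apply intervalIntegral.integral_eq_sub_of_hasDerivAt
    (f := fun t : ℝ => t ^ 2 / (2 * (1 - t ^ 2)))
  · intro x hx
    have hx' := hsub hx
    have h := one_sub_sq_pos hx'.1 hx'.2
    have h1 : HasDerivAt (fun t : ℝ => t ^ 2) (2 * x) x := by simpa using hasDerivAt_pow 2 x
    have h2 : HasDerivAt (fun t : ℝ => 2 * (1 - t ^ 2)) (2 * (-(2 * x))) x :=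
      (h1.const_sub 1).const_mul 2
    convert! h1.div h2 (by positivity) using 1
    field_simp
    ring
  · exact (ker_cont.mono hsub).intervalIntegrable

lemma W_props {V : ℝ → ℝ} {Vinf : ℝ} (hV : 0 < Vinf) (hc : ContinuousOn V (Ico 0 1))
    (hm : MonotoneOn V (Ico 0 1)) (h0 : V 0 = 0)
    (hle : ∀ x ∈ Ico (0:ℝ) 1, V x ≤ Vinf)
    (hge : ∀ x ∈ Ioo (0:ℝ) 1, Vinf * x ≤ V x) :
    MonotoneOn (Wf V) (Ioo 0 1) ∧ (∀ t ∈ Ioo (0:ℝ) 1, 0 ≤ Wf V t ∧ Wf V t ≤ Vinf ^ 2 / 2) ∧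
    ∀ s ∈ Ioo (0:ℝ) 1, ∀ t ∈ Ioo (0:ℝ) 1, t ^ 2 = 1 - (1 - s ^ 2) ^ 2 →
      s ^ 4 * Vinf ^ 2 / 2 ≤ Wf V t := by
  have hpos : ∀ x ∈ Ico (0:ℝ) 1, 0 ≤ V x := fun x hx => by
    have := hm (left_mem_Ico.2 one_pos) hx hx.1
    rwa [h0] at this
  have hii : ∀ s ∈ Ico (0:ℝ) 1, ∀ t ∈ Ico (0:ℝ) 1,
      IntervalIntegrable (fun σ => (σ / (1 - σ ^ 2) ^ 2) * V σ ^ 2) volume s t := by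
    intro s hs t ht
    apply ContinuousOn.intervalIntegrable
    exact (ker_cont.mul (hc.pow 2)).mono ((convex_Ico (0:ℝ) 1).ordConnected.uIcc_subset hs ht)
  have hkk : ∀ s ∈ Ico (0:ℝ) 1, ∀ t ∈ Ico (0:ℝ) 1, ∀ c : ℝ,
      IntervalIntegrable (fun σ => (σ / (1 - σ ^ 2) ^ 2) * c) volume s t := by
    intro s hs t ht c
    apply ContinuousOn.intervalIntegrable
    exact (ker_cont.mul continuousOn_const).mono
      ((convex_Ico (0:ℝ) 1).ordConnected.uIcc_subset hs ht)
  have hz : (0:ℝ) ∈ Ico (0:ℝ) 1 := left_mem_Ico.2 one_pos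
  -- upper and lower bounds for integrals
  have hup : ∀ s t, 0 ≤ s → s ≤ t → t < 1 → ∀ c, (∀ x ∈ Icc s t, V x ^ 2 ≤ c) →
      ∫ σ in s..t, (σ / (1 - σ ^ 2) ^ 2) * V σ ^ 2 ≤
        (t ^ 2 / (2 * (1 - t ^ 2)) - s ^ 2 / (2 * (1 - s ^ 2))) * c := by
    intro s t hs hst ht c hcc
    rw [← ker_integral hs hst ht, ← intervalIntegral.integral_mul_const]
    apply intervalIntegral.integral_mono_on hst (hii s ⟨hs, by linarith⟩ t ⟨by linarith, ht⟩)
      (hkk s ⟨hs, by linarith⟩ t ⟨by linarith, ht⟩ c)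
    intro x hx
    exact mul_le_mul_of_nonneg_left (hcc x hx) (ker_nonneg (hs.trans hx.1))
  have hlo : ∀ s t, 0 ≤ s → s ≤ t → t < 1 → ∀ c, (∀ x ∈ Icc s t, c ≤ V x ^ 2) →
      (t ^ 2 / (2 * (1 - t ^ 2)) - s ^ 2 / (2 * (1 - s ^ 2))) * c ≤
      ∫ σ in s..t, (σ / (1 - σ ^ 2) ^ 2) * V σ ^ 2 := by
    intro s t hs hst ht c hcc
    rw [← ker_integral hs hst ht, ← intervalIntegral.integral_mul_const]
    apply intervalIntegral.integral_mono_on hst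
      (hkk s ⟨hs, by linarith⟩ t ⟨by linarith, ht⟩ c) (hii s ⟨hs, by linarith⟩ t ⟨by linarith, ht⟩)
    intro x hx
    exact mul_le_mul_of_nonneg_left (hcc x hx) (ker_nonneg (hs.trans hx.1))
  have hadd : ∀ s t, 0 ≤ s → s ≤ t → t < 1 →
      ∫ σ in (0:ℝ)..t, (σ / (1 - σ ^ 2) ^ 2) * V σ ^ 2 =
      (∫ σ in (0:ℝ)..s, (σ / (1 - σ ^ 2) ^ 2) * V σ ^ 2) +
      ∫ σ in s..t, (σ / (1 - σ ^ 2) ^ 2) * V σ ^ 2 := by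
    intro s t hs hst ht
    exact (intervalIntegral.integral_add_adjacent_intervals
      (hii 0 hz s ⟨hs, by linarith⟩) (hii s ⟨hs, by linarith⟩ t ⟨by linarith, ht⟩)).symm
  refine ⟨?_, ?_, ?_⟩
  · intro s hs t ht hst
    have h1 := hup 0 s le_rfl hs.1.le hs.2 (V s ^ 2) (fun x hx =>
      pow_le_pow_left₀ (hpos x ⟨hx.1, hx.2.trans_lt hs.2⟩)
        (hm ⟨hx.1, hx.2.trans_lt hs.2⟩ ⟨hs.1.le, hs.2⟩ hx.2) 2)
    have h2 := hlo s t hs.1.le hst ht.2 (V s ^ 2) (fun x hx =>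
      pow_le_pow_left₀ (hpos s ⟨hs.1.le, hs.2⟩)
        (hm ⟨hs.1.le, hs.2⟩ ⟨hs.1.le.trans hx.1, hx.2.trans_lt ht.2⟩ hx.1) 2)
    have h3 := hadd s t hs.1.le hst ht.2
    unfold Wf
    rw [h3]
    have hs1 := one_sub_sq_pos hs.1.le hs.2
    have ht1 := one_sub_sq_pos ht.1.le ht.2
    set a := ∫ σ in (0:ℝ)..s, (σ / (1 - σ ^ 2) ^ 2) * V σ ^ 2
    set b := ∫ σ in s..t, (σ / (1 - σ ^ 2) ^ 2) * V σ ^ 2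
    have hs0 := hs.1
    have ht0 := ht.1
    set p := s ^ 2 / (2 * (1 - s ^ 2)) with hp
    set q := t ^ 2 / (2 * (1 - t ^ 2)) with hq
    have hp0 : 0 < p := by positivity
    have hq0 : 0 < q := by positivity
    have hpq : p ≤ q := by
      rw [hp, hq, div_le_div_iff₀ (by positivity) (by positivity)]
      nlinarith
    have e1 : (1 - s ^ 2) / s ^ 2 = 1 / (2 * p) := by rw [hp]; field_simp
    have e2 : (1 - t ^ 2) / t ^ 2 = 1 / (2 * q) := by rw [hq]; field_simp
    rw [e1, e2, one_div_mul_eq_div, one_div_mul_eq_div,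
      div_le_div_iff₀ (by positivity) (by positivity)]
    simp only [ne_eq, OfNat.ofNat_ne_zero, not_false_eq_true, zero_pow, zero_div, sub_zero] at h1
    have h4 := mul_le_mul_of_nonneg_left h2 hp0.le
    have h5 := mul_le_mul_of_nonneg_right h1 (sub_nonneg.2 hpq)
    nlinarith
  · intro t ht
    have ht1 := one_sub_sq_pos ht.1.le ht.2
    have ht0 := ht.1
    have h1 := hup 0 t le_rfl ht.1.le ht.2 (Vinf ^ 2) (fun x hx =>
      pow_le_pow_left₀ (hpos x ⟨hx.1, hx.2.trans_lt ht.2⟩) (hle x ⟨hx.1, hx.2.trans_lt ht.2⟩) 2)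
    have h2 := hlo 0 t le_rfl ht.1.le ht.2 0 (fun x hx => sq_nonneg _)
    rw [mul_zero] at h2
    simp only [ne_eq, OfNat.ofNat_ne_zero, not_false_eq_true, zero_pow, zero_div, sub_zero] at h1
    unfold Wf
    have hk : 0 ≤ (1 - t ^ 2) / t ^ 2 := by positivity
    refine ⟨mul_nonneg hk h2, (mul_le_mul_of_nonneg_left h1 hk).trans (le_of_eq ?_)⟩
    field_simp
  · intro s hs t ht hst
    have hs0 := hs.1
    have ht0 := ht.1
    have hs1 := one_sub_sq_pos hs.1.le hs.2
    have ht1 := one_sub_sq_pos ht.1.le ht.2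
    have hsq : s ^ 2 ≤ t ^ 2 := by rw [hst]; nlinarith
    have hst' : s ≤ t := by nlinarith
    have h2 := hlo s t hs.1.le hst' ht.2 ((Vinf * s) ^ 2) (fun x hx =>
      pow_le_pow_left₀ (by positivity) ((mul_le_mul_of_nonneg_left hx.1 hV.le).trans
        (hge x ⟨hs0.trans_le hx.1, hx.2.trans_lt ht.2⟩)) 2)
    have h1 := hlo 0 s le_rfl hs.1.le hs.2 0 (fun x hx => sq_nonneg _)
    rw [mul_zero] at h1
    have h3 := hadd s t hs.1.le hst' ht.2
    unfold Wf
    rw [h3]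
    have hk : 0 ≤ (1 - t ^ 2) / t ^ 2 := by positivity
    refine le_trans ?_ (mul_le_mul_of_nonneg_left (h2.trans (le_add_of_nonneg_left h1)) hk)
    have e : (1 - t ^ 2) / t ^ 2 *
        ((t ^ 2 / (2 * (1 - t ^ 2)) - s ^ 2 / (2 * (1 - s ^ 2))) * (Vinf * s) ^ 2)
        = (Vinf * s) ^ 2 / 2 * (1 - (1 - t ^ 2) / (1 - s ^ 2) * (s ^ 2 / t ^ 2)) := by
      field_simp
    have e2 : (1 - t ^ 2) / (1 - s ^ 2) = 1 - s ^ 2 := by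
      rw [hst]; field_simp; ring
    have e3 : s ^ 2 / t ^ 2 ≤ 1 := by rw [div_le_one (by positivity)]; exact hsq
    rw [e, e2]
    have e4 := mul_le_mul_of_nonneg_left e3 hs1.le
    have e5 := mul_le_mul_of_nonneg_left (show s ^ 2 ≤ 1 - (1 - s ^ 2) * (s ^ 2 / t ^ 2) by linarith)
      (show 0 ≤ (Vinf * s) ^ 2 / 2 by positivity)
    refine le_trans (le_of_eq ?_) e5
    ring

lemma Hfun_eq (V : ℝ → ℝ) (x : ℝ) : Hfun V x = ∫ t in x..1, Wf V t := rfl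

lemma W_tendsto {V : ℕ → ℝ → ℝ} {Vl : ℝ → ℝ} {Vinf : ℝ}
    (hc : ∀ k, ContinuousOn (V k) (Ico 0 1))
    (hpos : ∀ k, ∀ x ∈ Ico (0:ℝ) 1, 0 ≤ V k x)
    (hle : ∀ k, ∀ x ∈ Ico (0:ℝ) 1, V k x ≤ Vinf)
    (hconv : ∀ᵐ x : ℝ, x ∈ Ioo (0:ℝ) 1 → Tendsto (fun k => V k x) atTop (nhds (Vl x)))
    {t : ℝ} (ht : t ∈ Ioo (0:ℝ) 1) :
    Tendsto (fun k => Wf (V k) t) atTop (nhds (Wf Vl t)) := by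
  unfold Wf
  apply Tendsto.const_mul
  have hsub : Ioc 0 t ⊆ Ico 0 1 := fun z hz => ⟨hz.1.le, hz.2.trans_lt ht.2⟩
  have hsub' : Icc 0 t ⊆ Ico 0 1 := fun z hz => ⟨hz.1, hz.2.trans_lt ht.2⟩
  apply intervalIntegral.tendsto_integral_filter_of_dominated_convergence
    (fun σ => σ / (1 - σ ^ 2) ^ 2 * Vinf ^ 2)
  · refine Eventually.of_forall fun k => ?_
    rw [uIoc_of_le ht.1.le]
    exact ((ker_cont.mul ((hc k).pow 2)).mono hsub).aestronglyMeasurable measurableSet_Ioc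
  · refine Eventually.of_forall fun k => Eventually.of_forall fun x hx => ?_
    rw [uIoc_of_le ht.1.le] at hx
    have hx' := hsub hx
    have := ker_nonneg hx'.1
    rw [Real.norm_of_nonneg (by positivity)]
    exact mul_le_mul_of_nonneg_left (pow_le_pow_left₀ (hpos k x hx') (hle k x hx') 2) this
  · apply ContinuousOn.intervalIntegrable
    rw [uIcc_of_le ht.1.le]
    exact (ker_cont.mul continuousOn_const).mono hsub'
  · filter_upwards [hconv] with x hx hx2
    rw [uIoc_of_le ht.1.le] at hx2
    exact ((hx ⟨hx2.1, hx2.2.trans_lt ht.2⟩).pow 2).const_mul _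

lemma ae_lt_one : ∀ᵐ x : ℝ, x ≠ 1 := by simp [ae_iff, measure_singleton]

lemma mono_meas {W : ℝ → ℝ} (hm : MonotoneOn W (Ioo 0 1)) {x y : ℝ} (hx : 0 < x) (hy : y ≤ 1) :
    AEStronglyMeasurable W (volume.restrict (Ioc x y)) := by
  have h := (aemeasurable_restrict_of_monotoneOn (μ := volume) measurableSet_Ioo
    hm).aestronglyMeasurable
  rw [restrict_Ioo_eq_restrict_Ioc] at h
  exact h.mono_measure (Measure.restrict_mono (Ioc_subset_Ioc hx.le hy) le_rfl)

lemma mono_integrable {W : ℝ → ℝ} {M : ℝ} (hm : MonotoneOn W (Ioo 0 1))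
    (hb : ∀ t ∈ Ioo (0:ℝ) 1, 0 ≤ W t ∧ W t ≤ M) {x y : ℝ} (hx : 0 < x) (hxy : x ≤ y)
    (hy : y ≤ 1) : IntervalIntegrable W volume x y := by
  rw [intervalIntegrable_iff_integrableOn_Ioc_of_le hxy]
  refine Integrable.of_bound (mono_meas hm hx hy) M ?_
  rw [ae_restrict_iff' measurableSet_Ioc]
  filter_upwards [ae_lt_one] with z hz hz2
  have := hb z ⟨hx.trans hz2.1, lt_of_le_of_ne (hz2.2.trans hy) hz⟩
  rw [Real.norm_of_nonneg this.1]
  exact this.2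

lemma H_tendsto {W : ℕ → ℝ → ℝ} {Wl : ℝ → ℝ} {M : ℝ}
    (hm : ∀ k, MonotoneOn (W k) (Ioo 0 1))
    (hb : ∀ k, ∀ t ∈ Ioo (0:ℝ) 1, 0 ≤ W k t ∧ W k t ≤ M)
    (hconv : ∀ t ∈ Ioo (0:ℝ) 1, Tendsto (fun k => W k t) atTop (nhds (Wl t)))
    {x : ℝ} (hx : x ∈ Ioo (0:ℝ) 1) :
    Tendsto (fun k => ∫ t in x..1, W k t) atTop (nhds (∫ t in x..1, Wl t)) := by
  apply intervalIntegral.tendsto_integral_filter_of_dominated_convergence (fun _ => M)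
  · refine Eventually.of_forall fun k => ?_
    rw [uIoc_of_le hx.2.le]
    exact mono_meas (hm k) hx.1 le_rfl
  · refine Eventually.of_forall fun k => ?_
    filter_upwards [ae_lt_one] with z hz hz2
    rw [uIoc_of_le hx.2.le] at hz2
    have := hb k z ⟨hx.1.trans hz2.1, lt_of_le_of_ne hz2.2 hz⟩
    rw [Real.norm_of_nonneg this.1]
    exact this.2
  · exact intervalIntegrable_const
  · filter_upwards [ae_lt_one] with z hz hz2
    rw [uIoc_of_le hx.2.le] at hz2
    exact hconv z ⟨hx.1.trans hz2.1, lt_of_le_of_ne hz2.2 hz⟩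

lemma W_contra {W : ℝ → ℝ} {M E x y t₀ : ℝ} (hm : MonotoneOn W (Ioo 0 1))
    (hb : ∀ t ∈ Ioo (0:ℝ) 1, 0 ≤ W t ∧ W t ≤ M) (ht₀ : t₀ ∈ Ioo (0:ℝ) 1) (hE : 0 < W t₀ + E)
    (hx : 0 < x) (hxy : x < y) (hy : y < 1)
    (h1 : (∫ t in x..1, W t) + E * (1 - x) = 0) (h2 : (∫ t in y..1, W t) + E * (1 - y) = 0) :
    False := by
  have hy0 : 0 < y := hx.trans hxy
  have hlow : ∀ u z, 0 < u → u < 1 → z ∈ Ioc u 1 → z ≠ 1 → W u ≤ W z := by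
    intro u z hu hu1 hz hz1
    exact hm ⟨hu, hu1⟩ ⟨hu.trans hz.1, lt_of_le_of_ne hz.2 hz1⟩ hz.1.le
  have key : ∀ u, 0 < u → u < 1 → W u * (1 - u) ≤ ∫ t in u..1, W t := by
    intro u hu hu1
    have h : ∫ t in u..1, (fun _ => W u) t ≤ ∫ t in u..1, W t := by
      apply intervalIntegral.integral_mono_on_of_le_Ioo hu1.le intervalIntegrable_const
        (mono_integrable hm hb hu hu1.le le_rfl)
      intro z hz
      exact hm ⟨hu, hu1⟩ ⟨hu.trans hz.1, hz.2⟩ hz.1.le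
    simp only [intervalIntegral.integral_const, smul_eq_mul] at h
    linarith
  have key2 : ∀ u v, 0 < u → u ≤ v → v < 1 → (W u * (v - u) ≤ ∫ t in u..v, W t) ∧
      (∫ t in u..v, W t) ≤ W v * (v - u) := by
    intro u v hu huv hv
    have hu' : u ∈ Ioo (0:ℝ) 1 := ⟨hu, huv.trans_lt hv⟩
    have hv' : v ∈ Ioo (0:ℝ) 1 := ⟨hu.trans_le huv, hv⟩
    have hi := mono_integrable hm hb hu huv hv.le
    have h : ∫ t in u..v, (fun _ => W u) t ≤ ∫ t in u..v, W t := by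
      apply intervalIntegral.integral_mono_on huv intervalIntegrable_const hi
      intro z hz
      exact hm hu' ⟨hu.trans_le hz.1, hz.2.trans_lt hv⟩ hz.1
    have h' : ∫ t in u..v, W t ≤ ∫ t in u..v, (fun _ => W v) t := by
      apply intervalIntegral.integral_mono_on huv hi intervalIntegrable_const
      intro z hz
      exact hm ⟨hu.trans_le hz.1, hz.2.trans_lt hv⟩ hv' hz.2
    simp only [intervalIntegral.integral_const, smul_eq_mul] at h h'
    constructor <;> linarith
  have hsplit : ∀ u v, 0 < u → u ≤ v → v < 1 →
      (∫ t in u..1, W t) = (∫ t in u..v, W t) + ∫ t in v..1, W t := by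
    intro u v hu huv hv
    exact (intervalIntegral.integral_add_adjacent_intervals
      (mono_integrable hm hb hu huv hv.le)
      (mono_integrable hm hb (hu.trans_le huv) hv.le le_rfl)).symm
  have hWy : 0 ≤ W y + E := by
    have a1 := hsplit x y hx hxy.le hy
    have a2 := (key2 x y hx hxy.le hy).2
    have : 0 ≤ (W y + E) * (y - x) := by linarith
    exact nonneg_of_mul_nonneg_left this (sub_pos.2 hxy)
  set t1 := max t₀ y
  have ht1 : t1 < 1 := max_lt ht₀.2 hy
  have ht1y : y ≤ t1 := le_max_right _ _
  have hWt : W t₀ ≤ W t1 := hm ht₀ ⟨hy0.trans_le ht1y, ht1⟩ (le_max_left _ _)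
  have a1 := hsplit y t1 hy0 ht1y ht1
  have a2 := (key2 y t1 hy0 ht1y ht1).1
  have a3 := key t1 (hy0.trans_le ht1y) ht1
  have a4 : 0 ≤ (W y + E) * (t1 - y) := mul_nonneg hWy (sub_nonneg.2 ht1y)
  have a5 : 0 < (W t1 + E) * (1 - t1) := mul_pos (by linarith) (by linarith)
  linarith

/-- A function with vanishing integrals over all intervals vanishes a.e. -/
lemma ae_zero_of_integrals {q : ℝ → ℝ}
    (hi : ∀ a b, 0 < a → a < b → b < 1 → IntervalIntegrable q volume a b)
    (h0 : ∀ a b, 0 < a → a < b → b < 1 → ∫ x in a..b, q x = 0) :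
    ∀ᵐ x : ℝ, x ∈ Ioo (0:ℝ) 1 → q x = 0 := by
  have hn : ∀ n : ℕ, ∀ᵐ x : ℝ, x ∈ Ioo (1 / ((n:ℝ) + 3)) (1 - 1 / ((n:ℝ) + 3)) → q x = 0 := by
    intro n
    have hp : 0 < 1 / ((n:ℝ) + 3) := by positivity
    have hp2 : 1 / ((n:ℝ) + 3) ≤ 1 / 3 := by
      apply one_div_le_one_div_of_le <;> [norm_num; skip]
      have : (0:ℝ) ≤ n := n.cast_nonneg
      linarith
    set a := 1 / ((n:ℝ) + 3)
    have hab : a < 1 - a := by linarith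
    filter_upwards [(hi a (1 - a) hp hab (by linarith)).ae_hasDerivAt_integral] with x hx hx2
    have h1 := hx (by rw [uIcc_of_le hab.le]; exact Ioo_subset_Icc_self hx2) a left_mem_uIcc
    have h2 : HasDerivAt (fun x => ∫ t in a..x, q t) 0 x := by
      refine (hasDerivAt_const x (0:ℝ)).congr_of_eventuallyEq ?_
      filter_upwards [isOpen_Ioo.mem_nhds hx2] with z hz
      exact h0 a z hp hz.1 (by linarith [hz.2])
    exact h1.unique h2
  filter_upwards [ae_all_iff.2 hn] with x hx hx2
  obtain ⟨n, hn⟩ := exists_nat_one_div_lt (lt_min hx2.1 (sub_pos.2 hx2.2))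
  have h3 : 1 / ((n:ℝ) + 3) < 1 / ((n:ℝ) + 1) := by
    apply one_div_lt_one_div_of_lt <;> [positivity; linarith]
  have h4 := h3.trans hn
  rw [lt_min_iff] at h4
  exact hx n ⟨h4.1, by linarith [h4.2]⟩

/-- Zero-viscosity limit (strong form): if in addition the solutions `(Θ_ν, V_ν)` converge
almost everywhere along a sequence `ν_k → 0`, then the limit is the explicit stationary
self-similar Euler solution with negative stream function: almost everywhere on `(0,1)`,
`V = V∞`, `Θ(x) = −√(V∞²+2E₀) √(x(1−x))/(1−x²) < 0`, and `Θ²/2 = F(V;x)`. -/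
theorem zero_viscosity_limit_strong (E₀ Vinf : ℝ) (hVinf : 0 < Vinf)
    (hE : 0 < E₀ + Vinf ^ 2 / 2)
    (Θ V : ℝ → ℝ → ℝ)
    (hsol : ∀ ν : ℝ, 0 < ν → IsNSSolution ν E₀ Vinf (Θ ν) (V ν))
    (hB : ∀ ν : ℝ, 0 < ν → BoundB E₀ Vinf (Θ ν))
    (νk : ℕ → ℝ) (hνk : ∀ k, 0 < νk k) (hνk0 : Tendsto νk atTop (nhds 0))
    (Θl Vl : ℝ → ℝ)
    (hΘconv : ∀ᵐ x ∂(volume.restrict (Set.Ioo (0 : ℝ) 1)),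
      Tendsto (fun k => Θ (νk k) x) atTop (nhds (Θl x)))
    (hVconv : ∀ᵐ x ∂(volume.restrict (Set.Ioo (0 : ℝ) 1)),
      Tendsto (fun k => V (νk k) x) atTop (nhds (Vl x))) :
    ∀ᵐ x ∂(volume.restrict (Set.Ioo (0 : ℝ) 1)),
      Vl x = Vinf ∧
      Θl x = -Real.sqrt (Vinf ^ 2 + 2 * E₀) * Real.sqrt (x * (1 - x)) / (1 - x ^ 2) ∧
      Θl x < 0 ∧
      Θl x ^ 2 / 2 = Ffun E₀ Vl x := by
  have hconv1 : ∀ᵐ x : ℝ, x ∈ Ioo (0:ℝ) 1 →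
      Tendsto (fun k => Θ (νk k) x) atTop (nhds (Θl x)) :=
    (ae_restrict_iff' measurableSet_Ioo).1 hΘconv
  have hconv2 : ∀ᵐ x : ℝ, x ∈ Ioo (0:ℝ) 1 →
      Tendsto (fun k => V (νk k) x) atTop (nhds (Vl x)) :=
    (ae_restrict_iff' measurableSet_Ioo).1 hVconv
  set T : ℕ → ℝ → ℝ := fun k => Θ (νk k) with hT
  set U : ℕ → ℝ → ℝ := fun k => V (νk k) with hU
  have hs : ∀ k, IsNSSolution (νk k) E₀ Vinf (T k) (U k) := fun k => hsol _ (hνk k)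
  have hb : ∀ k, BoundB E₀ Vinf (T k) := fun k => hB _ (hνk k)
  have hTneg : ∀ k, ∀ x ∈ Ioo (0:ℝ) 1, T k x < 0 := fun k x hx => (hb k x hx).2
  set K := Real.sqrt (2 * E₀ + Vinf ^ 2) with hK
  have hK0 : 0 ≤ K := Real.sqrt_nonneg _
  have hTabs : ∀ b, b < 1 → ∀ k, ∀ x, 0 < x → x ≤ b → |T k x| ≤ K / (1 - b ^ 2) := by
    intro b hb1 k x hx hxb
    have hx' : x ∈ Ioo (0:ℝ) 1 := ⟨hx, hxb.trans_lt hb1⟩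
    obtain ⟨h1, h2⟩ := hb k x hx'
    have p1 := one_sub_sq_pos hx.le hx'.2
    have p2 := one_sub_sq_pos (hx.le.trans hxb) hb1
    have p3 : Real.sqrt (x * (1 - x)) ≤ 1 := by
      rw [Real.sqrt_le_iff]; exact ⟨zero_le_one, by nlinarith⟩
    have p4 : K * Real.sqrt (x * (1 - x)) / (1 - x ^ 2) ≤ K / (1 - b ^ 2) := by
      apply div_le_div₀ hK0 (mul_le_of_le_one_right hK0 p3) p2
      nlinarith
    rw [abs_of_neg h2]
    rw [neg_mul, neg_div] at h1
    linarith
  have hprops := fun k => sol_props hVinf (hνk k) (hs k) (hTneg k)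
  have hUc : ∀ k, ContinuousOn (U k) (Ico 0 1) := fun k => (hs k).hVreg.continuousOn
  have hTc : ∀ k, ContinuousOn (T k) (Ico 0 1) := fun k => (hs k).hΘreg.continuousOn
  have hUpos : ∀ k, ∀ x ∈ Ico (0:ℝ) 1, 0 ≤ U k x := fun k x hx => by
    have := (hprops k).1 (left_mem_Ico.2 one_pos) hx hx.1
    rwa [(hs k).hV0] at this
  have hWp := fun k => W_props hVinf (hUc k) (hprops k).1 (hs k).hV0 (hprops k).2.1
    (hprops k).2.2.1
  have hWt : ∀ t ∈ Ioo (0:ℝ) 1, Tendsto (fun k => Wf (U k) t) atTop (nhds (Wf Vl t)) :=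
    fun t ht => W_tendsto hUc hUpos (fun k => (hprops k).2.1) hconv2 ht
  have hWm : MonotoneOn (Wf Vl) (Ioo 0 1) := fun s hs' t ht hst =>
    le_of_tendsto_of_tendsto' (hWt s hs') (hWt t ht) fun k => (hWp k).1 hs' ht hst
  have hWb : ∀ t ∈ Ioo (0:ℝ) 1, 0 ≤ Wf Vl t ∧ Wf Vl t ≤ Vinf ^ 2 / 2 := fun t ht =>
    ⟨ge_of_tendsto' (hWt t ht) fun k => ((hWp k).2.1 t ht).1,
      le_of_tendsto' (hWt t ht) fun k => ((hWp k).2.1 t ht).2⟩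
  have hWlow : ∃ t₀ ∈ Ioo (0:ℝ) 1, 0 < Wf Vl t₀ + E₀ := by
    have hcont : Tendsto (fun s : ℝ => s ^ 4 * Vinf ^ 2 / 2 + E₀) (nhdsWithin 1 (Iio 1))
        (nhds (1 ^ 4 * Vinf ^ 2 / 2 + E₀)) := by
      apply Tendsto.mono_left _ nhdsWithin_le_nhds
      exact (Continuous.tendsto (by fun_prop) 1)
    have hev := hcont.eventually (lt_mem_nhds (show 0 < 1 ^ 4 * Vinf ^ 2 / 2 + E₀ by linarith))
    obtain ⟨s, hs1, hs2⟩ := (hev.and (Ioo_mem_nhdsLT (zero_lt_one' ℝ))).exists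
    have p1 := one_sub_sq_pos hs2.1.le hs2.2
    have p0 : 0 < s ^ 2 := pow_pos hs2.1 2
    have hr : 0 < 1 - (1 - s ^ 2) ^ 2 := by nlinarith
    have ht : Real.sqrt (1 - (1 - s ^ 2) ^ 2) ∈ Ioo (0:ℝ) 1 := by
      refine ⟨Real.sqrt_pos.2 hr, ?_⟩
      rw [Real.sqrt_lt' one_pos]
      nlinarith
    refine ⟨_, ht, ?_⟩
    have : s ^ 4 * Vinf ^ 2 / 2 ≤ Wf Vl (Real.sqrt (1 - (1 - s ^ 2) ^ 2)) :=
      ge_of_tendsto' (hWt _ ht) fun k => (hWp k).2.2 s hs2 _ ht (Real.sq_sqrt hr.le)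
    linarith
  have hHt : ∀ x ∈ Ioo (0:ℝ) 1, Tendsto (fun k => Hfun (U k) x) atTop (nhds (Hfun Vl x)) :=
    fun x hx => H_tendsto (W := fun k => Wf (U k)) (fun k => (hWp k).1) (fun k => (hWp k).2.1)
      hWt hx
  have hFt : ∀ x ∈ Ioo (0:ℝ) 1, Tendsto (fun k => Ffun E₀ (U k) x) atTop
      (nhds (Ffun E₀ Vl x)) := by
    intro x hx
    exact ((hHt x hx).add_const _).const_mul _
  have hHb : ∀ k, ∀ x ∈ Ioo (0:ℝ) 1, |Hfun (U k) x| ≤ Vinf ^ 2 / 2 := by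
    intro k x hx
    have h := intervalIntegral.norm_integral_le_of_norm_le_const_ae (a := x) (b := 1)
      (f := Wf (U k)) (C := Vinf ^ 2 / 2) (by
        filter_upwards [ae_lt_one] with z hz hz2
        rw [uIoc_of_le hx.2.le] at hz2
        have := (hWp k).2.1 z ⟨hx.1.trans hz2.1, lt_of_le_of_ne hz2.2 hz⟩
        rw [Real.norm_of_nonneg this.1]
        exact this.2)
    rw [← Hfun_eq, Real.norm_eq_abs, abs_of_pos (sub_pos.2 hx.2)] at h
    refine h.trans (mul_le_of_le_one_right (by positivity) (by linarith [hx.1]))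
  -- the limit equation
  have hq : ∀ᵐ x : ℝ, x ∈ Ioo (0:ℝ) 1 → Θl x ^ 2 / 2 - Ffun E₀ Vl x = 0 := by
    have hdd : ∀ k, ∀ x ∈ Ioo (0:ℝ) 1, HasDerivAt (T k) (deriv (T k) x) x := fun k x hx =>
      (((hs k).hΘreg.contDiffAt (Ico_mem_nhds hx.1 hx.2)).differentiableAt
        (by norm_num)).hasDerivAt
    have hdc : ∀ k, ContinuousOn (deriv (T k)) (Ioo 0 1) := by
      intro k
      have h2 : ContDiffOn ℝ 1 (T k) (Ioo 0 1) := (hs k).hΘreg.mono Ioo_subset_Ico_self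
      exact h2.continuousOn_deriv_of_isOpen isOpen_Ioo le_rfl
    have hmain : ∀ a b, 0 < a → a < b → b < 1 →
        IntervalIntegrable (fun x => Θl x ^ 2 / 2 - Ffun E₀ Vl x) volume a b ∧
        ∫ x in a..b, (Θl x ^ 2 / 2 - Ffun E₀ Vl x) = 0 := by
      intro a b ha hab hb1
      have hsub : Icc a b ⊆ Ioo 0 1 := fun z hz => ⟨ha.trans_le hz.1, hz.2.trans_lt hb1⟩
      have hbp := one_sub_sq_pos (ha.trans hab).le hb1
      set C := (K / (1 - b ^ 2)) ^ 2 / 2 + 1 / (1 - b ^ 2) ^ 2 * (Vinf ^ 2 / 2 + |E₀|) with hC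
      have hbd : ∀ k, ∀ x ∈ Ioc a b, ‖νk k * deriv (T k) x‖ ≤ C := by
        intro k x hx
        have hx' : x ∈ Ioo (0:ℝ) 1 := hsub ⟨hx.1.le, hx.2⟩
        rw [(hs k).hΘeq x hx']
        refine (norm_sub_le _ _).trans (add_le_add ?_ ?_)
        · rw [Real.norm_of_nonneg (by positivity)]
          have := sq_le_sq' (b := K / (1 - b ^ 2)) (by
            linarith [neg_abs_le (T k x), hTabs b hb1 k x hx'.1 hx.2])
            ((le_abs_self _).trans (hTabs b hb1 k x hx'.1 hx.2))
          linarith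
        · unfold Ffun
          have hxp := one_sub_sq_pos hx'.1.le hx'.2
          rw [norm_mul, Real.norm_of_nonneg (ker_nonneg hx'.1.le)]
          apply mul_le_mul _ _ (norm_nonneg _) (by positivity)
          · apply div_le_div₀ zero_le_one hx'.2.le (by positivity)
            apply pow_le_pow_left₀ hbp.le
            have := hx.2
            have := hx'.1
            nlinarith
          · refine (norm_add_le _ _).trans (add_le_add (hHb k x hx') ?_)
            rw [norm_mul, Real.norm_eq_abs, Real.norm_of_nonneg (sub_nonneg.2 hx'.2.le)]
            exact mul_le_of_le_one_right (abs_nonneg _) (by linarith [hx'.1])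
      have hlim : ∀ᵐ x : ℝ, x ∈ Ioc a b → Tendsto (fun k => νk k * deriv (T k) x) atTop
          (nhds (Θl x ^ 2 / 2 - Ffun E₀ Vl x)) := by
        filter_upwards [hconv1] with x hx hx2
        have hx' : x ∈ Ioo (0:ℝ) 1 := hsub ⟨hx2.1.le, hx2.2⟩
        have := (((hx hx').pow 2).div_const 2).sub (hFt x hx')
        exact this.congr fun k => ((hs k).hΘeq x hx').symm
      have hmeas : ∀ k, AEStronglyMeasurable (fun x => νk k * deriv (T k) x)
          (volume.restrict (Ioc a b)) := fun k =>
        ((continuousOn_const.mul (hdc k)).mono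
          (Ioc_subset_Icc_self.trans hsub)).aestronglyMeasurable measurableSet_Ioc
      have hlim' := (ae_restrict_iff' (μ := volume) measurableSet_Ioc).2 hlim
      constructor
      · rw [intervalIntegrable_iff_integrableOn_Ioc_of_le hab.le]
        refine Integrable.of_bound (aestronglyMeasurable_of_tendsto_ae atTop hmeas hlim') C ?_
        filter_upwards [hlim', ae_restrict_mem measurableSet_Ioc] with x hx hx2
        exact le_of_tendsto' hx.norm fun k => hbd k x hx2
      · have h1 : Tendsto (fun k => ∫ x in a..b, νk k * deriv (T k) x) atTop
            (nhds (∫ x in a..b, (Θl x ^ 2 / 2 - Ffun E₀ Vl x))) := by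
          apply intervalIntegral.tendsto_integral_filter_of_dominated_convergence (fun _ => C)
          · rw [uIoc_of_le hab.le]
            exact Eventually.of_forall hmeas
          · rw [uIoc_of_le hab.le]
            exact Eventually.of_forall fun k => Eventually.of_forall (hbd k)
          · exact intervalIntegrable_const
          · rw [uIoc_of_le hab.le]
            exact hlim
        have h2 : ∀ k, ∫ x in a..b, νk k * deriv (T k) x = νk k * (T k b - T k a) := by
          intro k
          rw [intervalIntegral.integral_const_mul, intervalIntegral.integral_eq_sub_of_hasDerivAt]
          · intro x hx
            rw [uIcc_of_le hab.le] at hx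
            exact hdd k x (hsub hx)
          · apply ContinuousOn.intervalIntegrable
            rw [uIcc_of_le hab.le]
            exact (hdc k).mono hsub
        have h3 : Tendsto (fun k => νk k * (T k b - T k a)) atTop (nhds 0) := by
          apply squeeze_zero_norm (a := fun k => νk k * (2 * (K / (1 - b ^ 2))))
          · intro k
            rw [norm_mul, Real.norm_of_nonneg (hνk k).le]
            apply mul_le_mul_of_nonneg_left _ (hνk k).le
            have q1 := hTabs b hb1 k b (ha.trans hab) le_rfl
            have q2 := hTabs b hb1 k a ha hab.le
            have q3 := norm_sub_le (T k b) (T k a)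
            rw [Real.norm_eq_abs, Real.norm_eq_abs, Real.norm_eq_abs] at q3
            rw [Real.norm_eq_abs]
            linarith
          · simpa using hνk0.mul_const (2 * (K / (1 - b ^ 2)))
        simp only [h2] at h1
        exact tendsto_nhds_unique h1 h3
    exact ae_zero_of_integrals (fun a b ha hab hb1 => (hmain a b ha hab hb1).1)
      (fun a b ha hab hb1 => (hmain a b ha hab hb1).2)
  -- strict negativity of the integrals of the limit
  have hTlneg : ∀ᵐ x : ℝ, x ∈ Ioo (0:ℝ) 1 → Θl x ≤ 0 := by
    filter_upwards [hconv1] with x hx hx2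
    exact le_of_tendsto' (hx hx2) fun k => (hTneg k x hx2).le
  have hUlim : ∀ y ∈ Ioo (0:ℝ) 1, Tendsto (fun k => U k y) atTop (nhds Vinf) := by
    intro y hy
    have hy2 : y / 2 < y := by linarith [hy.1]
    have hy0 : 0 < y / 2 := by linarith [hy.1]
    have hsub : Ioc (y / 2) y ⊆ Ioo 0 1 := fun z hz => ⟨hy0.trans hz.1, hz.2.trans_lt hy.2⟩
    have hmeas : ∀ k, AEStronglyMeasurable (T k) (volume.restrict (Ioc (y / 2) y)) := fun k =>
      ((hTc k).mono (hsub.trans Ioo_subset_Ico_self)).aestronglyMeasurable measurableSet_Ioc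
    have hlim : ∀ᵐ x : ℝ, x ∈ Ioc (y / 2) y → Tendsto (fun k => T k x) atTop (nhds (Θl x)) := by
      filter_upwards [hconv1] with x hx hx2 using hx (hsub hx2)
    have hlim' := (ae_restrict_iff' (μ := volume) measurableSet_Ioc).2 hlim
    have hbd : ∀ k, ∀ x ∈ Ioc (y / 2) y, ‖T k x‖ ≤ K / (1 - y ^ 2) := fun k x hx =>
      hTabs y hy.2 k x (hsub hx).1 hx.2
    have hI : IntegrableOn Θl (Ioc (y / 2) y) volume := by
      refine Integrable.of_bound (aestronglyMeasurable_of_tendsto_ae atTop hmeas hlim')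
        (K / (1 - y ^ 2)) ?_
      filter_upwards [hlim', ae_restrict_mem measurableSet_Ioc] with x hx hx2
      exact le_of_tendsto' hx.norm fun k => hbd k x hx2
    have hIt : Tendsto (fun k => ∫ t in (y / 2)..y, T k t) atTop
        (nhds (∫ t in (y / 2)..y, Θl t)) := by
      apply intervalIntegral.tendsto_integral_filter_of_dominated_convergence
        (fun _ => K / (1 - y ^ 2))
      · rw [uIoc_of_le hy2.le]
        exact Eventually.of_forall hmeas
      · rw [uIoc_of_le hy2.le]
        exact Eventually.of_forall fun k => Eventually.of_forall (hbd k)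
      · exact intervalIntegrable_const
      · rw [uIoc_of_le hy2.le]
        exact hlim
    have hneg : ∫ t in (y / 2)..y, Θl t < 0 := by
      by_contra hcon
      push Not at hcon
      have hn : 0 ≤ᵐ[volume.restrict (Ioc (y / 2) y)] fun t => -Θl t := by
        have h := (ae_restrict_iff' (μ := volume) (s := Ioc (y / 2) y) (p := fun x => Θl x ≤ 0)
          measurableSet_Ioc).2 (by filter_upwards [hTlneg] with x hx hx2 using hx (hsub hx2))
        filter_upwards [h] with x hx
        simpa using hx
      rw [intervalIntegral.integral_of_le hy2.le] at hcon
      have hz : ∫ t in Ioc (y / 2) y, -Θl t = 0 := by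
        apply le_antisymm
        · rw [MeasureTheory.integral_neg]; linarith
        · exact integral_nonneg_of_ae hn
      have hz2 := (integral_eq_zero_iff_of_nonneg_ae hn hI.neg).1 hz
      have hz3 := (ae_restrict_iff' (μ := volume) measurableSet_Ioc).1 hz2
      have hJ : ∀ᵐ x : ℝ, x ∈ Ioc (y / 2) y → (∫ t in x..1, Wf Vl t) + E₀ * (1 - x) = 0 := by
        filter_upwards [hz3, hq] with x h1 h2 hx
        have hx' := hsub hx
        have h3 : Θl x = 0 := by simpa using h1 hx
        have h4 := h2 hx'
        have hxp := one_sub_sq_pos hx'.1.le hx'.2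
        have hx0 := hx'.1
        rw [h3] at h4
        unfold Ffun at h4
        rw [Hfun_eq] at h4
        have h5 : x / (1 - x ^ 2) ^ 2 * ((∫ t in x..1, Wf Vl t) + E₀ * (1 - x)) = 0 := by
          linarith
        rcases mul_eq_zero.1 h5 with h6 | h6
        · exact absurd h6 (by positivity)
        · exact h6
      have hpick : ∀ a b : ℝ, a < b → Ioo a b ⊆ Ioc (y / 2) y →
          ∃ x ∈ Ioo a b, (∫ t in x..1, Wf Vl t) + E₀ * (1 - x) = 0 := by
        intro a b hab hsub2
        by_contra hno
        push Not at hno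
        have hv : volume (Ioo a b) = 0 := by
          refine measure_mono_null ?_ (ae_iff.1 hJ)
          intro x hx hx2
          exact hno x hx (hx2 (hsub2 hx))
        rw [Real.volume_Ioo, ENNReal.ofReal_eq_zero] at hv
        linarith
      obtain ⟨x1, hx1, e1⟩ := hpick (y / 2) (3 * y / 4) (by linarith)
        (fun z hz => ⟨hz.1, by linarith [hz.2]⟩)
      obtain ⟨x2, hx2, e2⟩ := hpick (3 * y / 4) y (by linarith)
        (fun z hz => ⟨by linarith [hz.1], hz.2.le⟩)
      obtain ⟨t₀, ht₀, hE₀⟩ := hWlow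
      exact W_contra hWm hWb ht₀ hE₀ (by linarith [hx1.1]) (hx1.2.trans hx2.1)
        (hx2.2.trans hy.2) e1 e2
    have hνinv : Tendsto (fun k => (νk k)⁻¹) atTop atTop := by
      apply Tendsto.inv_tendsto_nhdsGT_zero
      exact tendsto_nhdsWithin_iff.2 ⟨hνk0, Eventually.of_forall hνk⟩
    have hexp : Tendsto (fun k => Vinf / (y / 2) *
        Real.exp ((∫ t in (y / 2)..y, T k t) / νk k)) atTop (nhds 0) := by
      have h1 : Tendsto (fun k => (∫ t in (y / 2)..y, T k t) / νk k) atTop atBot := by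
        simp only [div_eq_mul_inv]
        exact hIt.neg_mul_atTop hneg hνinv
      simpa using (Real.tendsto_exp_atBot.comp h1).const_mul (Vinf / (y / 2))
    refine tendsto_of_tendsto_of_tendsto_of_le_of_le
      (g := fun k => Vinf - Vinf / (y / 2) * Real.exp ((∫ t in (y / 2)..y, T k t) / νk k))
      (h := fun _ => Vinf) (by simpa using hexp.const_sub Vinf) tendsto_const_nhds ?_ ?_
    · intro k
      have := (hprops k).2.2.2 (y / 2) y hy0 hy2 hy.2
      simp only
      linarith
    · intro k
      exact (hprops k).2.1 y ⟨hy.1.le, hy.2⟩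
  have hVl : ∀ᵐ x : ℝ, x ∈ Ioo (0:ℝ) 1 → Vl x = Vinf := by
    filter_upwards [hconv2] with x hx hx2
    exact tendsto_nhds_unique (hx hx2) (hUlim x hx2)
  have hWl : ∀ t ∈ Ioo (0:ℝ) 1, Wf Vl t = Vinf ^ 2 / 2 := by
    intro t ht
    have h : ∫ σ in (0:ℝ)..t, (σ / (1 - σ ^ 2) ^ 2) * Vl σ ^ 2 =
        ∫ σ in (0:ℝ)..t, (σ / (1 - σ ^ 2) ^ 2) * Vinf ^ 2 := by
      apply intervalIntegral.integral_congr_ae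
      filter_upwards [hVl] with x hx hx2
      rw [uIoc_of_le ht.1.le] at hx2
      rw [hx ⟨hx2.1, hx2.2.trans_lt ht.2⟩]
    unfold Wf
    rw [h, intervalIntegral.integral_mul_const, ker_integral le_rfl ht.1.le ht.2]
    have := one_sub_sq_pos ht.1.le ht.2
    have := ht.1
    field_simp
    ring
  have hHl : ∀ x ∈ Ioo (0:ℝ) 1, Hfun Vl x = Vinf ^ 2 / 2 * (1 - x) := by
    intro x hx
    rw [Hfun_eq]
    have h : ∫ t in x..1, Wf Vl t = ∫ t in x..1, (fun _ => Vinf ^ 2 / 2) t := by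
      apply intervalIntegral.integral_congr_ae
      filter_upwards [ae_lt_one] with z hz hz2
      rw [uIoc_of_le hx.2.le] at hz2
      exact hWl z ⟨hx.1.trans hz2.1, lt_of_le_of_ne hz2.2 hz⟩
    rw [h]
    simp only [intervalIntegral.integral_const, smul_eq_mul]
    ring
  rw [ae_restrict_iff' measurableSet_Ioo]
  filter_upwards [hVl, hq, hTlneg] with x h1 h2 h3 hx
  have hxp := one_sub_sq_pos hx.1.le hx.2
  have hq2 := h2 hx
  have hx0 : 0 < x * (1 - x) := mul_pos hx.1 (sub_pos.2 hx.2)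
  have hKp : 0 < Vinf ^ 2 + 2 * E₀ := by linarith
  have hval : Θl x = -Real.sqrt (Vinf ^ 2 + 2 * E₀) * Real.sqrt (x * (1 - x)) / (1 - x ^ 2) := by
    have hsq : Θl x ^ 2 =
        (Real.sqrt (Vinf ^ 2 + 2 * E₀) * Real.sqrt (x * (1 - x)) / (1 - x ^ 2)) ^ 2 := by
      rw [div_pow, mul_pow, Real.sq_sqrt hKp.le, Real.sq_sqrt hx0.le]
      unfold Ffun at hq2
      rw [hHl x hx] at hq2
      have : Θl x ^ 2 =
        2 * (x / (1 - x ^ 2) ^ 2 * (Vinf ^ 2 / 2 * (1 - x) + E₀ * (1 - x))) := by linarith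
      rw [this]
      field_simp
    rcases sq_eq_sq_iff_eq_or_eq_neg.1 hsq with h | h
    · have : 0 ≤ Real.sqrt (Vinf ^ 2 + 2 * E₀) * Real.sqrt (x * (1 - x)) / (1 - x ^ 2) := by
        positivity
      have h0 := h3 hx
      have : Θl x = 0 := le_antisymm h0 (h ▸ this)
      rw [neg_mul, neg_div, ← h, this, neg_zero]
    · rw [h, neg_mul, neg_div]
  refine ⟨h1 hx, hval, ?_, by linarith⟩
  rw [hval, neg_mul, neg_div, neg_lt_zero]
  have a1 := Real.sqrt_pos.2 hKp
  have a2 := Real.sqrt_pos.2 hx0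
  positivity
end

section
/- Let V∞ > 0 and E₀ > 0, and let {(Θ_ν, V_ν)}_{ν>0} be a family of solutions of the reduced self-similar Navier–Stokes system satisfying the uniform bound (B) and such that (1−x²)Θ_ν(x) → 0 as x → 1⁻ for each ν. Then the functions A_ν(x) = (1−x²)Θ_ν(x) are of bounded variation on [0,1] with total variation bounded uniformly in ν (each A_ν is first nonincreasing and then nondecreasing, with |A_ν(x)| ≤ √(2E₀+V∞²)·√(x(1−x))), and consequently there exist a sequence ν_k → 0 and a function Θ such that Θ_{ν_k}(x) → Θ(x) for almost every x ∈ (0,1). -/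
open Set Filter MeasureTheory intervalIntegral

lemma helly_mono (u : ℕ → ℝ → ℝ) (M : ℝ) (hm : ∀ k, Monotone (u k))
    (hb : ∀ k x, |u k x| ≤ M) :
    ∃ φ : ℕ → ℕ, StrictMono φ ∧ ∃ G : ℝ → ℝ, ∀ᵐ x ∂(volume : Measure ℝ),
      Tendsto (fun k => u (φ k) x) atTop (nhds (G x)) := by
  have hc : IsCompact (Set.pi univ (fun _ : ℚ => Icc (-M) M)) :=
    isCompact_univ_pi (fun _ => isCompact_Icc)
  obtain ⟨L, hL, φ, hφ, hlim⟩ := hc.tendsto_subseq (x := fun k (q : ℚ) => u k q)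
    (fun k q _ => abs_le.1 (hb k q))
  have hlim' : ∀ q : ℚ, Tendsto (fun k => u (φ k) q) atTop (nhds (L q)) := by
    intro q
    exact (tendsto_pi_nhds.1 hlim) q
  have hLm : Monotone L := by
    intro a b hab
    exact le_of_tendsto_of_tendsto' (hlim' a) (hlim' b)
      (fun k => hm _ (by exact_mod_cast hab))
  have hLb : ∀ q, L q ≤ M := fun q => (hL q (mem_univ _)).2
  let S : ℝ → Set ℝ := fun x => L '' {q : ℚ | (q : ℝ) < x}
  have hbdd : ∀ x, BddAbove (S x) := by
    intro x
    refine ⟨M, ?_⟩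
    rintro _ ⟨q, _, rfl⟩
    exact hLb q
  have hne : ∀ x, (S x).Nonempty := by
    intro x
    obtain ⟨q, hq⟩ := exists_rat_lt x
    exact ⟨L q, q, hq, rfl⟩
  let G : ℝ → ℝ := fun x => sSup (S x)
  have hG1 : ∀ (y : ℝ) (q : ℚ), y ≤ q → G y ≤ L q := by
    intro y q hy
    refine csSup_le (hne y) ?_
    rintro _ ⟨q', hq', rfl⟩
    have h1 : (q' : ℝ) < y := hq'
    apply hLm
    have : (q' : ℝ) ≤ q := by linarith
    exact_mod_cast this
  have hG2 : ∀ (z : ℝ) (q : ℚ), (q : ℝ) < z → L q ≤ G z := by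
    intro z q hq
    exact le_csSup (hbdd z) ⟨q, hq, rfl⟩
  have hGm : Monotone G := by
    intro a b hab
    refine csSup_le_csSup (hbdd b) (hne a) ?_
    rintro _ ⟨q, hq, rfl⟩
    exact ⟨q, lt_of_lt_of_le hq hab, rfl⟩
  refine ⟨φ, hφ, G, ?_⟩
  have hcount := hGm.countable_not_continuousAt
  have hae : ∀ᵐ x ∂(volume : Measure ℝ), ContinuousAt G x := by
    rw [ae_iff]
    exact hcount.measure_zero _
  filter_upwards [hae] with x hx
  rw [tendsto_order]
  constructor
  · intro a ha
    have h1 : ∀ᶠ y in nhds x, a < G y := hx.eventually (lt_mem_nhds ha)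
    obtain ⟨y, hy, hyx⟩ := ((h1.filter_mono nhdsWithin_le_nhds).and
      (self_mem_nhdsWithin : Iio x ∈ nhdsWithin x (Iio x))).exists
    obtain ⟨q, hq1, hq2⟩ := exists_rat_btwn hyx
    have h2 : a < L q := lt_of_lt_of_le hy (hG1 y q hq1.le)
    filter_upwards [(hlim' q).eventually (lt_mem_nhds h2)] with k hk
    exact lt_of_lt_of_le hk (hm _ hq2.le)
  · intro a ha
    have h1 : ∀ᶠ y in nhds x, G y < a := hx.eventually (gt_mem_nhds ha)
    obtain ⟨y, hy, hyx⟩ := ((h1.filter_mono nhdsWithin_le_nhds).and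
      (self_mem_nhdsWithin : Ioi x ∈ nhdsWithin x (Ioi x))).exists
    obtain ⟨q, hq1, hq2⟩ := exists_rat_btwn hyx
    have h2 : L q < a := lt_of_le_of_lt (hG2 y q hq2) hy
    filter_upwards [(hlim' q).eventually (gt_mem_nhds h2)] with k hk
    exact lt_of_le_of_lt (hm _ hq1.le) hk

/-- Helly selection for functions on `[0,1]` that decrease then increase. -/
lemma helly_unimodal (A : ℕ → ℝ → ℝ) (M : ℝ) (c : ℕ → ℝ) (hc : ∀ k, c k ∈ Icc (0:ℝ) 1)
    (ha : ∀ k, AntitoneOn (A k) (Icc 0 (c k))) (hm : ∀ k, MonotoneOn (A k) (Icc (c k) 1))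
    (hb : ∀ k, ∀ x ∈ Icc (0:ℝ) 1, |A k x| ≤ M) :
    ∃ φ : ℕ → ℕ, StrictMono φ ∧ ∃ G : ℝ → ℝ, ∀ᵐ x ∂(volume : Measure ℝ), x ∈ Ioo (0:ℝ) 1 →
      Tendsto (fun k => A (φ k) x) atTop (nhds (G x)) := by
  let f : ℕ → ℝ → ℝ := fun k x => - A k (max 0 (min x (c k)))
  let g : ℕ → ℝ → ℝ := fun k x => A k (min 1 (max x (c k))) - A k (c k)
  have hf1 : ∀ k x, max 0 (min x (c k)) ∈ Icc 0 (c k) := fun k x =>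
    ⟨le_max_left _ _, max_le (hc k).1 (min_le_right _ _)⟩
  have hg1 : ∀ k x, min 1 (max x (c k)) ∈ Icc (c k) 1 := fun k x =>
    ⟨le_min (hc k).2 (le_max_right _ _), min_le_left _ _⟩
  have hfm : ∀ k, Monotone (f k) := by
    intro k x y hxy
    exact neg_le_neg (ha k (hf1 k x) (hf1 k y) (max_le_max le_rfl (min_le_min hxy le_rfl)))
  have hgm : ∀ k, Monotone (g k) := by
    intro k x y hxy
    exact sub_le_sub_right (hm k (hg1 k x) (hg1 k y)
      (min_le_min le_rfl (max_le_max hxy le_rfl))) _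
  have hfb : ∀ k x, |f k x| ≤ M := by
    intro k x
    simp only [f, abs_neg]
    exact hb k _ ⟨(hf1 k x).1, (hf1 k x).2.trans (hc k).2⟩
  have hgb : ∀ k x, |g k x| ≤ M + M := by
    intro k x
    refine (abs_sub _ _).trans (add_le_add (hb k _ ⟨(hc k).1.trans (hg1 k x).1, (hg1 k x).2⟩) (hb k _ (hc k)))
  obtain ⟨φ, hφ, F, hF⟩ := helly_mono f M hfm hfb
  obtain ⟨ψ, hψ, G, hG⟩ := helly_mono (fun k => g (φ k)) (M + M) (fun k => hgm _) (fun k => hgb _)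
  refine ⟨φ ∘ ψ, hφ.comp hψ, fun x => G x - F x, ?_⟩
  filter_upwards [hF, hG] with x h1 h2 hx
  refine (h2.sub (h1.comp hψ.tendsto_atTop)).congr ?_
  intro k
  simp only [f, g, Function.comp]
  rcases le_total x (c (φ (ψ k))) with h | h
  · rw [max_eq_right h, min_eq_left h, max_eq_right hx.1.le, min_eq_right (hc _).2]; ring
  · rw [max_eq_left h, min_eq_right h, max_eq_right (hc _).1, min_eq_right hx.2.le]; ring

lemma integrable_aux {f : ℝ → ℝ} {s : Set ℝ} (hs : OrdConnected s) (hf : ContinuousOn f s)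
    {a b : ℝ} (ha : a ∈ s) (hb : b ∈ s) : IntervalIntegrable f volume a b :=
  (hf.mono (hs.uIcc_subset ha hb)).intervalIntegrable

lemma ftc_aux {f : ℝ → ℝ} {s : Set ℝ} (hs : OrdConnected s) (hf : ContinuousOn f s)
    {a x : ℝ} (ha : a ∈ s) (hx : s ∈ nhds x) :
    HasDerivAt (fun y => ∫ t in a..y, f t) (f x) x := by
  have hxs : x ∈ interior s := mem_interior_iff_mem_nhds.2 hx
  refine integral_hasDerivAt_right (integrable_aux hs hf ha (interior_subset hxs)) ?_
    (hf.continuousAt hx)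
  exact (hf.mono interior_subset).stronglyMeasurableAtFilter isOpen_interior x hxs

lemma V_sq_mono {ν E₀ Vinf : ℝ} {Θ V : ℝ → ℝ} (hν : 0 < ν) (h : IsNSSolution ν E₀ Vinf Θ V) :
    MonotoneOn (fun x => V x ^ 2) (Ico 0 1) := by
  have hΘc : ContinuousOn Θ (Ioo 0 1) := h.hΘreg.continuousOn.mono Ioo_subset_Ico_self
  have hVc : ContinuousOn V (Ico 0 1) := h.hVreg.continuousOn
  have hV2 : ContDiffOn ℝ (1 + 1) V (Ioo 0 1) := by
    have := h.hVreg.mono (Ioo_subset_Ico_self : Ioo (0:ℝ) 1 ⊆ Ico 0 1)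
    convert this using 1
    norm_num
  have hV' : DifferentiableOn ℝ (deriv V) (Ioo 0 1) :=
    ((contDiffOn_succ_iff_deriv_of_isOpen isOpen_Ioo).1 hV2).2.2.differentiableOn (by norm_num)
  have hVd : DifferentiableOn ℝ V (Ioo 0 1) :=
    ((contDiffOn_succ_iff_deriv_of_isOpen isOpen_Ioo).1 hV2).1
  have h2 : (1/2 : ℝ) ∈ Ioo (0:ℝ) 1 := by norm_num
  let P : ℝ → ℝ := fun y => ∫ t in (1/2:ℝ)..y, Θ t
  have hP : ∀ x ∈ Ioo (0:ℝ) 1, HasDerivAt P (Θ x) x := fun x hx =>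
    ftc_aux ordConnected_Ioo hΘc h2 (Ioo_mem_nhds hx.1 hx.2)
  let W : ℝ → ℝ := fun x => deriv V x * Real.exp (-(P x / ν))
  have hW : ∀ x ∈ Ioo (0:ℝ) 1, HasDerivAt W 0 x := by
    intro x hx
    have h1 : HasDerivAt (deriv V) (deriv (deriv V) x) x :=
      (hV'.differentiableAt (Ioo_mem_nhds hx.1 hx.2)).hasDerivAt
    have h3 := h1.mul (((hP x hx).div_const ν).neg.exp)
    refine HasDerivAt.congr_deriv (f := W) h3 ?_
    have := h.hVeq x hx
    have e : deriv (deriv V) x = Θ x * deriv V x / ν := by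
      field_simp; linarith
    rw [e]
    simp only [Pi.neg_apply]
    ring
  have hWc : ∀ x ∈ Ioo (0:ℝ) 1, W x = W (1/2) := by
    intro x hx
    refine isOpen_Ioo.is_const_of_deriv_eq_zero isPreconnected_Ioo
      (fun y hy => (hW y hy).differentiableAt.differentiableWithinAt)
      (fun y hy => (hW y hy).deriv) hx h2
  have hVe : ∀ x ∈ Ioo (0:ℝ) 1, deriv V x = W (1/2) * Real.exp (P x / ν) := by
    intro x hx
    rw [← hWc x hx]
    simp only [W]
    rw [mul_assoc, ← Real.exp_add]
    simp
  have h00 : (0:ℝ) ∈ Ico (0:ℝ) 1 := by norm_num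
  rcases le_total 0 (W (1/2)) with hw | hw
  · have hm : MonotoneOn V (Ico 0 1) := by
      refine monotoneOn_of_deriv_nonneg (convex_Ico 0 1) hVc (by rwa [interior_Ico]) ?_
      rw [interior_Ico]
      intro x hx
      rw [hVe x hx]; positivity
    intro x hx y hy hxy
    have h1 := hm h00 hx hx.1
    rw [h.hV0] at h1
    have h3 := hm hx hy hxy
    exact pow_le_pow_left₀ h1 h3 2
  · have hm : AntitoneOn V (Ico 0 1) := by
      refine antitoneOn_of_deriv_nonpos (convex_Ico 0 1) hVc (by rwa [interior_Ico]) ?_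
      rw [interior_Ico]
      intro x hx
      rw [hVe x hx]
      exact mul_nonpos_of_nonpos_of_nonneg hw (Real.exp_pos _).le
    intro x hx y hy hxy
    have h1 := hm h00 hx hx.1
    rw [h.hV0] at h1
    have h3 := hm hx hy hxy
    show V x ^ 2 ≤ V y ^ 2
    nlinarith

lemma K_concave {ν E₀ Vinf : ℝ} {Θ V : ℝ → ℝ} (hν : 0 < ν) (hE : 0 < E₀)
    (h : IsNSSolution ν E₀ Vinf Θ V) :
    ConcaveOn ℝ (Ioo 0 1) (fun x => x * (Hfun V x + E₀ * (1 - x))) := by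
  have hVm := V_sq_mono hν h
  have hVc : ContinuousOn V (Ico 0 1) := h.hVreg.continuousOn
  have hne : ∀ σ ∈ Ico (0:ℝ) 1, 0 < 1 - σ ^ 2 := by
    intro σ hσ
    nlinarith [hσ.1, hσ.2]
  let w : ℝ → ℝ := fun σ => (σ / (1 - σ ^ 2) ^ 2) * V σ ^ 2
  have hw : ContinuousOn w (Ico 0 1) := by
    refine ContinuousOn.mul (ContinuousOn.div continuousOn_id (by fun_prop) ?_) (hVc.pow 2)
    intro σ hσ
    exact pow_ne_zero _ (hne σ hσ).ne'
  let J : ℝ → ℝ := fun t => ∫ σ in (0:ℝ)..t, w σ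
  have h00 : (0:ℝ) ∈ Ico (0:ℝ) 1 := by norm_num
  have hJ : ∀ x ∈ Ioo (0:ℝ) 1, HasDerivAt J (w x) x := fun x hx =>
    ftc_aux ordConnected_Ico hw h00 (Ico_mem_nhds hx.1 hx.2)
  have hJb : ∀ x ∈ Ioo (0:ℝ) 1, 2 * J x ≤ V x ^ 2 / (1 - x ^ 2) := by
    intro x hx
    have hxI : x ∈ Ico (0:ℝ) 1 := ⟨hx.1.le, hx.2⟩
    have hsub : ∀ σ ∈ Icc 0 x, σ ∈ Ico (0:ℝ) 1 := fun σ hσ => ⟨hσ.1, hσ.2.trans_lt hx.2⟩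
    let v : ℝ → ℝ := fun σ => (σ / (1 - σ ^ 2) ^ 2) * V x ^ 2
    have hv : ContinuousOn v (Ico 0 1) := by
      refine ContinuousOn.mul (ContinuousOn.div continuousOn_id (by fun_prop) ?_) continuousOn_const
      intro σ hσ
      exact pow_ne_zero _ (hne σ hσ).ne'
    have h1 : J x ≤ ∫ σ in (0:ℝ)..x, v σ := by
      refine integral_mono_on hx.1.le (integrable_aux ordConnected_Ico hw h00 hxI)
        (integrable_aux ordConnected_Ico hv h00 hxI) ?_
      intro σ hσ
      have := hVm (hsub σ hσ) hxI hσ.2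
      refine mul_le_mul_of_nonneg_left this ?_
      have := hσ.1
      positivity
    have h3 : ∫ σ in (0:ℝ)..x, v σ =
        V x ^ 2 / 2 * (1 - x ^ 2)⁻¹ - V x ^ 2 / 2 * (1 - (0:ℝ) ^ 2)⁻¹ := by
      refine integral_eq_sub_of_hasDerivAt (f := fun σ => V x ^ 2 / 2 * (1 - σ ^ 2)⁻¹) ?_
        (integrable_aux ordConnected_Ico hv h00 hxI)
      intro σ hσ
      rw [uIcc_of_le hx.1.le] at hσ
      have hp := hne σ (hsub σ hσ)
      have h4 : HasDerivAt (fun σ : ℝ => 1 - σ ^ 2) (-(2 * σ)) σ := by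
        have := ((hasDerivAt_id σ).pow 2).const_sub 1
        simpa using this
      refine HasDerivAt.congr_deriv ((h4.inv hp.ne').const_mul (V x ^ 2 / 2)) ?_
      simp only [v]
      field_simp
    rw [h3] at h1
    have : 0 ≤ V x ^ 2 := sq_nonneg _
    rw [div_eq_mul_inv]
    norm_num at h1
    linarith
  let g : ℝ → ℝ := fun t => ((1 - t ^ 2) / t ^ 2) * J t
  have hg : ContinuousOn g (Ioo 0 1) := by
    refine ContinuousOn.mul (ContinuousOn.div (by fun_prop) (by fun_prop) ?_)
      (fun x hx => (hJ x hx).continuousAt.continuousWithinAt)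
    intro σ hσ
    exact pow_ne_zero _ hσ.1.ne'
  have hHg : ∀ x, Hfun V x = ∫ t in x..1, g t := fun x => rfl
  by_cases hint : ∃ a ∈ Ioo (0:ℝ) 1, IntervalIntegrable g volume a 1
  · obtain ⟨a, ha, hia⟩ := hint
    have hHe : ∀ x ∈ Ioo (0:ℝ) 1, Hfun V x = Hfun V a - ∫ t in a..x, g t := by
      intro x hx
      rw [hHg, hHg]
      have h1 := integrable_aux ordConnected_Ioo hg ha hx
      have := integral_add_adjacent_intervals h1 (h1.symm.trans hia)
      linarith
    have hHd : ∀ x ∈ Ioo (0:ℝ) 1, HasDerivAt (Hfun V) (-g x) x := by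
      intro x hx
      have h1 := (ftc_aux ordConnected_Ioo hg ha (Ioo_mem_nhds hx.1 hx.2)).const_sub (Hfun V a)
      refine h1.congr_of_eventuallyEq ?_
      filter_upwards [Ioo_mem_nhds hx.1 hx.2] with y hy
      exact hHe y hy
    have hK1 : ∀ x ∈ Ioo (0:ℝ) 1, HasDerivAt (fun x => x * (Hfun V x + E₀ * (1 - x)))
        (Hfun V x - (x⁻¹ - x) * J x + E₀ * (1 - 2 * x)) x := by
      intro x hx
      have h1 := (hasDerivAt_id x).mul
        ((hHd x hx).add (((hasDerivAt_id x).const_sub 1).const_mul E₀))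
      refine HasDerivAt.congr_deriv h1 ?_
      simp only [g, id, Pi.add_apply]
      have := hx.1.ne'
      field_simp
      ring
    have hK2 : ∀ x ∈ Ioo (0:ℝ) 1,
        HasDerivAt (fun x => Hfun V x - (x⁻¹ - x) * J x + E₀ * (1 - 2 * x))
        (2 * J x - V x ^ 2 / (1 - x ^ 2) - 2 * E₀) x := by
      intro x hx
      have h1 := ((hHd x hx).sub (((hasDerivAt_inv hx.1.ne').sub (hasDerivAt_id x)).mul (hJ x hx))).add
        ((((hasDerivAt_id x).const_mul 2).const_sub 1).const_mul E₀)
      refine HasDerivAt.congr_deriv h1 ?_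
      simp only [g, w, id, Pi.sub_apply]
      have := hx.1.ne'
      have := (hne x ⟨hx.1.le, hx.2⟩).ne'
      simp
      field_simp
      ring
    refine concaveOn_of_hasDerivWithinAt2_nonpos (convex_Ioo 0 1)
      (f' := fun x => Hfun V x - (x⁻¹ - x) * J x + E₀ * (1 - 2 * x))
      (f'' := fun x => 2 * J x - V x ^ 2 / (1 - x ^ 2) - 2 * E₀)
      (fun x hx => (hK1 x hx).continuousAt.continuousWithinAt) ?_ ?_ ?_
    · rw [interior_Ioo]; exact fun x hx => (hK1 x hx).hasDerivWithinAt
    · rw [interior_Ioo]; exact fun x hx => (hK2 x hx).hasDerivWithinAt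
    · rw [interior_Ioo]; intro x hx
      have := hJb x hx
      linarith
  · have h0 : ∀ x ∈ Ioo (0:ℝ) 1, Hfun V x = 0 := by
      intro x hx
      rw [hHg]
      exact integral_undef (fun hi => hint ⟨x, hx, hi⟩)
    have hq : ConcaveOn ℝ (Ioo (0:ℝ) 1) (fun x => x * (E₀ * (1 - x))) := by
      refine ⟨convex_Ioo 0 1, ?_⟩
      intro x _ y _ a b ha hb hab
      have hb' : b = 1 - a := by linarith
      subst hb'
      simp only [smul_eq_mul]
      have : 0 ≤ E₀ * (a * (1 - a) * (x - y) ^ 2) := by positivity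
      nlinarith
    refine hq.congr ?_
    intro x hx
    simp [h0 x hx]

lemma A_bound {E₀ Vinf : ℝ} {Θ : ℝ → ℝ} (hB : BoundB E₀ Vinf Θ) (h0 : Θ 0 = 0) :
    ∀ x ∈ Icc (0:ℝ) 1, |(1 - x ^ 2) * Θ x| ≤
      Real.sqrt (2 * E₀ + Vinf ^ 2) * Real.sqrt (x * (1 - x)) := by
  intro x hx
  rcases eq_or_lt_of_le hx.1 with rfl | hx0
  · simp [h0]
  rcases eq_or_lt_of_le hx.2 with rfl | hx1
  · simp
  obtain ⟨h1, h2⟩ := hB x ⟨hx0, hx1⟩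
  have hp : 0 < 1 - x ^ 2 := by nlinarith
  rw [div_lt_iff₀ hp] at h1
  rw [abs_le]
  constructor
  · linarith
  · have : (1 - x ^ 2) * Θ x ≤ 0 := mul_nonpos_of_nonneg_of_nonpos hp.le h2.le
    have : 0 ≤ Real.sqrt (2 * E₀ + Vinf ^ 2) * Real.sqrt (x * (1 - x)) := by positivity
    linarith

set_option maxHeartbeats 1000000 in
lemma A_unimodal {ν E₀ Vinf : ℝ} {Θ V : ℝ → ℝ} (hν : 0 < ν) (hE : 0 < E₀)
    (h : IsNSSolution ν E₀ Vinf Θ V) (hB : BoundB E₀ Vinf Θ)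
    (hA1 : Tendsto (fun x => (1 - x ^ 2) * Θ x) (nhdsWithin 1 (Set.Iio 1)) (nhds 0)) :
    ∃ c ∈ Set.Icc (0 : ℝ) 1,
      AntitoneOn (fun x => (1 - x ^ 2) * Θ x) (Set.Icc 0 c) ∧
      MonotoneOn (fun x => (1 - x ^ 2) * Θ x) (Set.Icc c 1) := by
  have hK := K_concave hν hE h
  set K : ℝ → ℝ := fun x => x * (Hfun V x + E₀ * (1 - x)) with hKdef
  set A : ℝ → ℝ := fun x => (1 - x ^ 2) * Θ x with hAdef
  have hA0 : A 0 = 0 := by simp [hAdef, h.hΘ0]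
  have hAone : A 1 = 0 := by simp [hAdef]
  have hne : ∀ x ∈ Ioo (0:ℝ) 1, 0 < 1 - x ^ 2 := fun x hx => by nlinarith [hx.1, hx.2]
  have hAneg : ∀ x ∈ Ioo (0:ℝ) 1, A x < 0 := fun x hx =>
    mul_neg_of_pos_of_neg (hne x hx) (hB x hx).2
  have hAc : ContinuousOn A (Icc 0 1) := by
    intro x hx
    rcases eq_or_lt_of_le hx.2 with rfl | hx1
    · have h1 : ContinuousWithinAt A (Iio 1) 1 := by
        unfold ContinuousWithinAt; rw [hAone]; exact hA1
      exact (continuousWithinAt_insert_self.2 h1).mono (fun y hy => by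
        rcases eq_or_lt_of_le hy.2 with rfl | hy
        · exact mem_insert _ _
        · exact mem_insert_of_mem _ hy)
    · have h1 : ContinuousOn A (Ico 0 1) :=
        ContinuousOn.mul (by fun_prop) h.hΘreg.continuousOn
      refine (h1 x ⟨hx.1, hx1⟩).mono_of_mem_nhdsWithin ?_
      have : Icc (0:ℝ) 1 ∩ Iio 1 ∈ nhdsWithin x (Icc 0 1) :=
        inter_mem self_mem_nhdsWithin (mem_nhdsWithin_of_mem_nhds (Iio_mem_nhds hx1))
      exact mem_of_superset this (fun y hy => ⟨hy.1.1, hy.2⟩)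
  have hcrit : ∀ x ∈ Ioo (0:ℝ) 1, IsLocalExtr A x → K x = A x ^ 2 / 2 - 2 * ν * x * A x := by
    intro x hx hext
    have hΘd : HasDerivAt Θ (deriv Θ x) x :=
      ((h.hΘreg.differentiableOn (by norm_num)).differentiableAt
        (Ico_mem_nhds hx.1 hx.2)).hasDerivAt
    have h4 : HasDerivAt (fun σ : ℝ => 1 - σ ^ 2) (-(2 * x)) x := by
      have := ((hasDerivAt_id x).pow 2).const_sub 1
      simpa using this
    have h5 := hext.hasDerivAt_eq_zero (h4.mul hΘd)
    have h6 := h.hΘeq x hx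
    have hF : (1 - x ^ 2) ^ 2 * Ffun E₀ V x = K x := by
      have := (hne x hx).ne'
      simp only [Ffun, hKdef]
      field_simp
    have h7 : (1 - x ^ 2) ^ 2 * (ν * deriv Θ x) =
        (1 - x ^ 2) ^ 2 * (Θ x ^ 2 / 2) - K x := by rw [h6, ← hF]; ring
    simp only [hAdef]
    linear_combination h7 - ν * (1 - x ^ 2) * h5
  have hvalley : ∀ x y z, 0 ≤ x → x < y → y < z → z ≤ 1 → A x < A y → A z < A y → False := by
    intro x y z h0 hxy hyz h1 hxA hzA
    obtain ⟨q, hq, hqm⟩ := isCompact_Icc.exists_isMaxOn (nonempty_Icc.2 (hxy.trans hyz).le)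
      (hAc.mono (Icc_subset_Icc h0 h1))
    have hqy : A y ≤ A q := hqm ⟨hxy.le, hyz.le⟩
    have hqx : x < q := lt_of_le_of_ne hq.1 (by rintro rfl; linarith)
    have hqz : q < z := lt_of_le_of_ne hq.2 (by rintro rfl; linarith)
    have hqI : q ∈ Ioo (0:ℝ) 1 := ⟨by linarith, by linarith⟩
    have hqn := hAneg q hqI
    obtain ⟨p, hp, hpm⟩ := isCompact_Icc.exists_isMinOn (nonempty_Icc.2 hqI.1.le)
      (hAc.mono (Icc_subset_Icc le_rfl hqI.2.le))
    have hpx : A p ≤ A x := hpm ⟨h0, hqx.le⟩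
    have hp0 : 0 < p := lt_of_le_of_ne hp.1 (by rintro rfl; linarith)
    have hpq : p < q := lt_of_le_of_ne hp.2 (by rintro rfl; linarith)
    obtain ⟨r, hr, hrm⟩ := isCompact_Icc.exists_isMinOn (nonempty_Icc.2 hqI.2.le)
      (hAc.mono (Icc_subset_Icc hqI.1.le le_rfl))
    have hrz : A r ≤ A z := hrm ⟨hqz.le, h1⟩
    have hr1 : r < 1 := lt_of_le_of_ne hr.2 (by rintro rfl; linarith)
    have hqr : q < r := lt_of_le_of_ne hr.1 (by rintro rfl; linarith)
    have hpI : p ∈ Ioo (0:ℝ) 1 := ⟨hp0, by linarith⟩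
    have hrI : r ∈ Ioo (0:ℝ) 1 := ⟨by linarith, hr1⟩
    have eq := hcrit q hqI (Or.inr (hqm.isLocalMax (Icc_mem_nhds hqx hqz)))
    have ep := hcrit p hpI (Or.inl (hpm.isLocalMin (Icc_mem_nhds hp0 hpq)))
    have er := hcrit r hrI (Or.inl (hrm.isLocalMin (Icc_mem_nhds hqr hr1)))
    set c := A q with hc
    have gp : c ^ 2 / 2 - 2 * ν * p * c < K p := by
      rw [ep]
      have : A p < c := by linarith
      have h2 : 0 < ν * p := mul_pos hν hp0
      nlinarith [mul_pos h2 (sub_pos.2 this)]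
    have gr : c ^ 2 / 2 - 2 * ν * r * c < K r := by
      rw [er]
      have : A r < c := by linarith
      have h2 : 0 < ν * r := mul_pos hν hrI.1
      nlinarith [mul_pos h2 (sub_pos.2 this)]
    have hpr : 0 < r - p := by linarith
    have hcc := hK.2 hpI hrI
      (div_nonneg (sub_nonneg.2 hqr.le) hpr.le) (div_nonneg (sub_nonneg.2 hpq.le) hpr.le)
      (by field_simp; ring)
    have hcomb : ((r - q) / (r - p)) • p + ((q - p) / (r - p)) • r = q := by
      simp only [smul_eq_mul]; field_simp; ring
    rw [hcomb, eq] at hcc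
    simp only [smul_eq_mul] at hcc
    rw [div_mul_eq_mul_div, div_mul_eq_mul_div, ← add_div, div_le_iff₀ hpr] at hcc
    nlinarith [mul_pos (sub_pos.2 hqr) (sub_pos.2 gp), mul_pos (sub_pos.2 hpq) (sub_pos.2 gr)]
  obtain ⟨c, hc, hcm⟩ := isCompact_Icc.exists_isMinOn (nonempty_Icc.2 zero_le_one) hAc
  refine ⟨c, hc, ?_, ?_⟩
  · intro x hx y hy hxy
    by_contra hlt
    push Not at hlt
    have hx1 : A c ≤ A x := hcm ⟨hx.1, hx.2.trans hc.2⟩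
    have h1 : x < y := lt_of_le_of_ne hxy (by rintro rfl; exact lt_irrefl _ hlt)
    have h2 : y < c := lt_of_le_of_ne hy.2 (by rintro rfl; linarith)
    exact hvalley x y c hx.1 h1 h2 hc.2 hlt (by linarith)
  · intro x hx y hy hxy
    by_contra hlt
    push Not at hlt
    have hx1 : A c ≤ A y := hcm ⟨hc.1.trans hy.1, hy.2⟩
    have h1 : x < y := lt_of_le_of_ne hxy (by rintro rfl; exact lt_irrefl _ hlt)
    have h2 : c < x := lt_of_le_of_ne hx.1 (by rintro rfl; linarith)
    exact hvalley c x y hc.1 h2 h1 hy.2 (by linarith) hlt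

/-- Compactness via bounded variation: if `E₀ > 0` and the family of solutions satisfies the
uniform bound (B) and `(1−x²)Θ_ν(x) → 0` as `x → 1⁻`, then the functions
`A_ν(x) = (1−x²)Θ_ν(x)` have uniformly bounded variation on `[0,1]` (each `A_ν` is first
nonincreasing, then nondecreasing, and `|A_ν(x)| ≤ √(2E₀+V∞²) √(x(1−x))`), and consequently
some sequence `Θ_{ν_k}` with `ν_k → 0` converges almost everywhere on `(0,1)`. -/
theorem bounded_variation_compactness (E₀ Vinf : ℝ) (hVinf : 0 < Vinf) (hE₀ : 0 < E₀)
    (Θ V : ℝ → ℝ → ℝ)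
    (hsol : ∀ ν : ℝ, 0 < ν → IsNSSolution ν E₀ Vinf (Θ ν) (V ν))
    (hB : ∀ ν : ℝ, 0 < ν → BoundB E₀ Vinf (Θ ν))
    (hA1 : ∀ ν : ℝ, 0 < ν →
      Tendsto (fun x => (1 - x ^ 2) * Θ ν x) (nhdsWithin 1 (Set.Iio 1)) (nhds 0)) :
    (∃ C : ℝ, ∀ ν : ℝ, 0 < ν →
      eVariationOn (fun x => (1 - x ^ 2) * Θ ν x) (Set.Icc 0 1) ≤ ENNReal.ofReal C) ∧
    (∀ ν : ℝ, 0 < ν → ∃ c ∈ Set.Icc (0 : ℝ) 1,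
      AntitoneOn (fun x => (1 - x ^ 2) * Θ ν x) (Set.Icc 0 c) ∧
      MonotoneOn (fun x => (1 - x ^ 2) * Θ ν x) (Set.Icc c 1)) ∧
    (∀ ν : ℝ, 0 < ν → ∀ x ∈ Set.Icc (0 : ℝ) 1,
      |(1 - x ^ 2) * Θ ν x| ≤ Real.sqrt (2 * E₀ + Vinf ^ 2) * Real.sqrt (x * (1 - x))) ∧
    (∃ νk : ℕ → ℝ, (∀ k, 0 < νk k) ∧ Tendsto νk atTop (nhds 0) ∧
      ∃ Θl : ℝ → ℝ, ∀ᵐ x ∂(volume.restrict (Set.Ioo (0 : ℝ) 1)),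
        Tendsto (fun k => Θ (νk k) x) atTop (nhds (Θl x))) := by
  have hbd : ∀ ν : ℝ, 0 < ν → ∀ x ∈ Set.Icc (0 : ℝ) 1,
      |(1 - x ^ 2) * Θ ν x| ≤ Real.sqrt (2 * E₀ + Vinf ^ 2) * Real.sqrt (x * (1 - x)) :=
    fun ν hν => A_bound (hB ν hν) (hsol ν hν).hΘ0
  have huni := fun ν (hν : 0 < ν) => A_unimodal hν hE₀ (hsol ν hν) (hB ν hν) (hA1 ν hν)
  set M := Real.sqrt (2 * E₀ + Vinf ^ 2) with hM
  have hM0 : 0 ≤ M := Real.sqrt_nonneg _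
  have hbd' : ∀ ν : ℝ, 0 < ν → ∀ x ∈ Set.Icc (0 : ℝ) 1, |(1 - x ^ 2) * Θ ν x| ≤ M := by
    intro ν hν x hx
    refine (hbd ν hν x hx).trans (mul_le_of_le_one_right hM0 ?_)
    rw [Real.sqrt_le_one]
    nlinarith [hx.1, hx.2]
  refine ⟨⟨2 * M + 2 * M, ?_⟩, huni, hbd, ?_⟩
  · intro ν hν
    obtain ⟨c, hc, ha, hm⟩ := huni ν hν
    have hadd := eVariationOn.Icc_add_Icc (fun x => (1 - x ^ 2) * Θ ν x) (s := univ)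
      hc.1 hc.2 (mem_univ c)
    simp only [univ_inter] at hadd
    rw [← hadd, ENNReal.ofReal_add (by positivity) (by positivity)]
    have b0 := abs_le.1 (hbd' ν hν 0 (by norm_num))
    have b1 := abs_le.1 (hbd' ν hν 1 (by norm_num))
    have bc := abs_le.1 (hbd' ν hν c hc)
    refine add_le_add ?_ ?_
    · have h1 : MonotoneOn (fun x => -((1 - x ^ 2) * Θ ν x)) (Icc 0 c) := ha.neg
      have h2 := h1.eVariationOn_eq (left_mem_Icc.2 hc.1) (right_mem_Icc.2 hc.1)
      rw [inter_self] at h2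
      have h3 : eVariationOn (fun x => -((1 - x ^ 2) * Θ ν x)) (Icc 0 c) =
          eVariationOn (fun x => (1 - x ^ 2) * Θ ν x) (Icc 0 c) := by
        simp only [eVariationOn, edist_neg_neg]
      rw [← h3]
      refine h2.le.trans (ENNReal.ofReal_le_ofReal ?_)
      linarith
    · have h2 := hm.eVariationOn_eq (left_mem_Icc.2 hc.2) (right_mem_Icc.2 hc.2)
      rw [inter_self] at h2
      refine h2.le.trans (ENNReal.ofReal_le_ofReal ?_)
      linarith
  · let n : ℕ → ℝ := fun k => 1 / ((k : ℝ) + 1)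
    have hn : ∀ k, 0 < n k := fun k => by positivity
    have hn0 : Tendsto n atTop (nhds 0) := tendsto_one_div_add_atTop_nhds_zero_nat
    choose c hc ha hm using fun k => huni (n k) (hn k)
    obtain ⟨φ, hφ, G, hG⟩ := helly_unimodal (fun k x => (1 - x ^ 2) * Θ (n k) x) M c hc ha hm
      (fun k => hbd' (n k) (hn k))
    refine ⟨fun k => n (φ k), fun k => hn _, hn0.comp hφ.tendsto_atTop,
      fun x => (1 - x ^ 2)⁻¹ * G x, ?_⟩
    rw [ae_restrict_iff' measurableSet_Ioo]
    filter_upwards [hG] with x hx hxI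
    have hp : (1 - x ^ 2) ≠ 0 := by
      have : 0 < 1 - x ^ 2 := by nlinarith [hxI.1, hxI.2]
      exact this.ne'
    refine ((hx hxI).const_mul (1 - x ^ 2)⁻¹).congr ?_
    intro k
    rw [inv_mul_cancel_left₀ hp]
end
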